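/- arXiv:1306.5708 — 10 statements merged into one kernel-verified Lean document; each statement's English description precedes it below -/
import Mathlib

section
/- Let α, β be permutations of {1,…,n} and let γ be one of the cycles appearing in the cycle decomposition of β (a nontrivial cycle factor of β). Then α(β(x)) = β(α(x)) for every x in the support of γ if and only if the conjugate αγα⁻¹ is also one of the cycles appearing in the cycle decomposition of β. -/
section

variable {Ω : Type*} [Fintype Ω] [DecidableEq Ω] {α β γ : Equiv.Perm Ω}

theorem conj_mem_cycleFactorsFinset_iff :
    α * γ * α⁻¹ ∈ β.cycleFactorsFinset ↔ γ.IsCycle ∧ ∀ x ∈ γ.support, α (γ x) = β (α x) := by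
  have β_eq_conj : β = α * (α⁻¹ * β * α) * α⁻¹ := by group
  calc
    α * γ * α⁻¹ ∈ β.cycleFactorsFinset ↔ γ ∈ (α⁻¹ * β * α).cycleFactorsFinset := by
      rw [← Equiv.Perm.mem_cycleFactorsFinset_conj (α⁻¹ * β * α) α, ← β_eq_conj]
    _ ↔ γ.IsCycle ∧ ∀ x ∈ γ.support, γ x = α⁻¹ (β (α x)) :=
      Equiv.Perm.mem_cycleFactorsFinset_iff
    _ ↔ γ.IsCycle ∧ ∀ x ∈ γ.support, α (γ x) = β (α x) := by
      simp only [Equiv.Perm.eq_inv_iff_eq]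

theorem stmt2_general (hγ : γ ∈ β.cycleFactorsFinset) :
    (∀ x ∈ γ.support, α (β x) = β (α x)) ↔ α * γ * α⁻¹ ∈ β.cycleFactorsFinset := by
  obtain ⟨γ_isCycle, γ_eq_β⟩ := Equiv.Perm.mem_cycleFactorsFinset_iff.mp hγ
  rw [conj_mem_cycleFactorsFinset_iff, and_iff_right γ_isCycle]
  exact forall₂_congr fun x hx => by rw [γ_eq_β x hx]

end

theorem stmt2 (n : ℕ) (α β γ : Equiv.Perm (Fin n)) (hγ : γ ∈ β.cycleFactorsFinset) :
    (∀ x ∈ γ.support, α (β x) = β (α x)) ↔ α * γ * α⁻¹ ∈ β.cycleFactorsFinset :=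
  stmt2_general hγ
end

section
/- Let β be a permutation of {1,…,n} whose maximum cycle length in its cycle decomposition is m, and let γ be a cycle of length m in the cycle decomposition of β. If a permutation α satisfies α(β(x)) = β(α(x)) for at least m−1 of the m points x in the support of γ (equivalently, the number of points x in the support of γ with α(β(x)) ≠ β(α(x)) is at most 1), then α(β(x)) = β(α(x)) for every point x in the support of γ. -/
/-!
Let `γ` have length `m` and suppose `α` fails to commute with `β` at most at `x ∈ γ.support`.
Walking along `γ` from `β x` to `x` avoids the exception, so `α (β ^ i (β x)) = β ^ i (α (β x))`
for `i < m`. These points are pairwise distinct, so the `β`-cycle through `α (β x)` has length at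
least `m`, and by maximality it has length exactly `m`. Hence the last step, from `α x`, has to
return to `α (β x)`.
-/

open Equiv.Perm Function

section AlmostSemiconj

variable {X Y : Type*} {α : X → Y} {τ : Y → Y}

theorem apply_iterate_eq_iterate_apply {f : X → X} {y : X} {n : ℕ}
    (h : ∀ i < n, α (f (f^[i] y)) = τ (α (f^[i] y))) :
    α (f^[n] y) = τ^[n] (α y) := by
  induction n with
  | zero => rfl
  | succ n ih =>
    rw [iterate_succ_apply', iterate_succ_apply', h n n.lt_succ_self,
      ih fun i hi => h i (hi.trans n.lt_succ_self)]

variable {σ : Equiv.Perm X} {s : Finset X} {x : X}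

theorem apply_pow_eq_iterate_apply_of_forall_ne (hσ : σ.IsCycleOn s) (hx : x ∈ s)
    (h : ∀ a ∈ s, a ≠ x → α (σ a) = τ (α a)) {i : ℕ} (hi : i < s.card) :
    α ((σ ^ i) (σ x)) = τ^[i] (α (σ x)) := by
  rw [coe_pow]
  refine apply_iterate_eq_iterate_apply fun j hj => ?_
  have iterate_eq : σ^[j] (σ x) = (σ ^ (j + 1)) x := by rw [coe_pow, iterate_succ_apply]
  rw [iterate_eq]
  have mem : (σ ^ (j + 1)) x ∈ s := hσ.1.mapsTo.perm_pow (j + 1) hx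
  have ne : (σ ^ (j + 1)) x ≠ x := fun heq =>
    Nat.not_dvd_of_pos_of_lt j.succ_pos (by lia) ((hσ.pow_apply_eq hx).mp heq)
  exact h _ mem ne

theorem card_le_of_isPeriodicPt_of_forall_ne (hσ : σ.IsCycleOn s) (hα : Set.InjOn α s) (hx : x ∈ s)
    (h : ∀ a ∈ s, a ≠ x → α (σ a) = τ (α a)) {k : ℕ} (hk : 0 < k)
    (hper : IsPeriodicPt τ k (α (σ x))) : s.card ≤ k := by
  by_contra! hlt
  have hσx : σ x ∈ s := hσ.1.mapsTo hx
  have image_eq : α ((σ ^ k) (σ x)) = α (σ x) :=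
    (apply_pow_eq_iterate_apply_of_forall_ne hσ hx h hlt).trans hper
  have return_eq : (σ ^ k) (σ x) = σ x :=
    hα (hσ.1.mapsTo.perm_pow k hσx) hσx image_eq
  exact Nat.not_dvd_of_pos_of_lt hk hlt ((hσ.pow_apply_eq hσx).mp return_eq)

theorem apply_eq_of_forall_ne_of_exists_isPeriodicPt (hσ : σ.IsCycleOn s)
    (hα : Set.InjOn α s) (hx : x ∈ s) (h : ∀ a ∈ s, a ≠ x → α (σ a) = τ (α a))
    (hτ : ∃ k ∈ Set.Ioc 0 s.card, IsPeriodicPt τ k (α (σ x))) :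
    α (σ x) = τ (α x) := by
  obtain ⟨k, ⟨hk, hks⟩, hper⟩ := hτ
  obtain rfl : k = s.card := hks.antisymm (card_le_of_isPeriodicPt_of_forall_ne hσ hα hx h hk hper)
  obtain ⟨j, hj⟩ := Nat.exists_eq_add_one.mpr hk
  have pow_eq : (σ ^ j) (σ x) = x := by
    rw [← mul_apply, ← pow_succ, ← hj, hσ.pow_card_apply hx]
  calc α (σ x) = τ^[j + 1] (α (σ x)) := by rw [← hj, hper.eq]
    _ = τ (τ^[j] (α (σ x))) := iterate_succ_apply' ..
    _ = τ (α ((σ ^ j) (σ x))) := by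
      rw [apply_pow_eq_iterate_apply_of_forall_ne hσ hx h (by lia)]
    _ = τ (α x) := by rw [pow_eq]

end AlmostSemiconj

theorem exists_isPeriodicPt_of_card_support_le {X : Type*} [Fintype X] [DecidableEq X]
    {β : Equiv.Perm X} {m : ℕ} (hm : 0 < m)
    (hmax : ∀ δ ∈ β.cycleFactorsFinset, δ.support.card ≤ m) (y : X) :
    ∃ k ∈ Set.Ioc 0 m, IsPeriodicPt β k y := by
  by_cases hy : β y = y
  · exact ⟨1, ⟨one_pos, hm⟩, hy⟩
  · have mem : y ∈ (β.cycleOf y).support := mem_support_cycleOf_iff.mpr ⟨.rfl, mem_support.mpr hy⟩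
    refine ⟨(β.cycleOf y).support.card, ⟨Finset.card_pos.mpr ⟨y, mem⟩, hmax _ ?_⟩, ?_⟩
    · exact cycleOf_mem_cycleFactorsFinset_iff.mpr (mem_support.mpr hy)
    · rw [IsPeriodicPt, ← coe_pow]
      exact (isCycleOn_support_cycleOf β y).pow_card_apply mem

theorem stmt4_general {X Y : Type*} [DecidableEq Y] {σ : Equiv.Perm X} {τ : Y → Y} {α : X → Y}
    {s : Finset X} (hσ : σ.IsCycleOn s) (hα : Set.InjOn α s)
    (hτ : ∀ x ∈ s, ∃ k ∈ Set.Ioc 0 s.card, IsPeriodicPt τ k (α x))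
    (h : (s.filter fun x => α (σ x) ≠ τ (α x)).card ≤ 1) :
    ∀ x ∈ s, α (σ x) = τ (α x) := by
  intro x hx
  by_contra hbad
  have hne : ∀ a ∈ s, a ≠ x → α (σ a) = τ (α a) := by
    intro a ha hax
    by_contra ha_bad
    exact hax (Finset.card_le_one.mp h a (Finset.mem_filter.mpr ⟨ha, ha_bad⟩)
      x (Finset.mem_filter.mpr ⟨hx, hbad⟩))
  exact hbad (apply_eq_of_forall_ne_of_exists_isPeriodicPt hσ hα hx hne
    (hτ _ (hσ.1.mapsTo hx)))

theorem stmt4 (n m : ℕ) (α β γ : Equiv.Perm (Fin n))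
    (hmax : ∀ δ ∈ β.cycleFactorsFinset, δ.support.card ≤ m)
    (hγ : γ ∈ β.cycleFactorsFinset) (hγm : γ.support.card = m)
    (h : (γ.support.filter fun x => α (β x) ≠ β (α x)).card ≤ 1) :
    ∀ x ∈ γ.support, α (β x) = β (α x) := by
  subst hγm
  exact stmt4_general (isCycleOn_support_of_mem_cycleFactorsFinset hγ) α.injective.injOn
    (fun x hx => exists_isPeriodicPt_of_card_support_le (Finset.card_pos.mpr ⟨x, hx⟩) hmax (α x)) h
end

section
/- Let α, β be permutations of {1,…,n} and let γ' be a cycle of length i in the cycle decomposition of β. If every point y in the support of γ' satisfies α(β(α⁻¹(y))) = β(y) (i.e., every point of γ' is the image under α of a good commuting point of α and β), then there exists a cycle γ of length i in the cycle decomposition of β with αγα⁻¹ = γ'. -/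
section

open Equiv.Perm

variable {X : Type*} [Fintype X] [DecidableEq X] {α β γ γ' σ τ : Equiv.Perm X}

theorem mem_cycleFactorsFinset_congr (h : ∀ x ∈ γ.support, σ x = τ x) :
    γ ∈ σ.cycleFactorsFinset ↔ γ ∈ τ.cycleFactorsFinset := by
  simp only [mem_cycleFactorsFinset_iff]
  exact and_congr_right fun _ => forall₂_congr fun x hx => by rw [h x hx]

theorem stmt5_general (hγ' : γ' ∈ β.cycleFactorsFinset)
    (h : ∀ y ∈ γ'.support, α (β (α⁻¹ y)) = β y) :
    ∃ γ ∈ β.cycleFactorsFinset, γ.support.card = γ'.support.card ∧ α * γ * α⁻¹ = γ' := by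
  have conj_eq : α * (α⁻¹ * γ' * α) * α⁻¹ = γ' := by group
  have mem_conj : γ' ∈ (α * β * α⁻¹).cycleFactorsFinset :=
    (mem_cycleFactorsFinset_congr h).mpr hγ'
  refine ⟨α⁻¹ * γ' * α, ?_, ?_, conj_eq⟩
  · rwa [← mem_cycleFactorsFinset_conj β α, conj_eq]
  · rw [← card_support_conj (σ := α), conj_eq]

end

theorem stmt5 (n i : ℕ) (α β γ' : Equiv.Perm (Fin n))
    (hγ' : γ' ∈ β.cycleFactorsFinset) (hi : γ'.support.card = i)
    (h : ∀ y ∈ γ'.support, α (β (α⁻¹ y)) = β y) :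
    ∃ γ ∈ β.cycleFactorsFinset, γ.support.card = i ∧ α * γ * α⁻¹ = γ' :=
  hi ▸ stmt5_general hγ' h
end

section
/- Let β be a permutation of {1,…,n} and let k be a nonnegative integer. Then the cardinality of the centralizer C_{S_n}(β) divides c(k,β), the number of permutations α with H(αβ,βα) = k. -/
/-- Hamming metric between two permutations of `Fin n`. -/
def ham {n : ℕ} (σ τ : Equiv.Perm (Fin n)) : ℕ :=
  Finset.card (Finset.univ.filter fun a => σ a ≠ τ a)

/-- `kcomm k β` is the number of permutations `α` that `k`-commute with `β`,
i.e. with `H(αβ, βα) = k`. -/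
noncomputable def kcomm {n : ℕ} (k : ℕ) (β : Equiv.Perm (Fin n)) : ℕ :=
  Nat.card {α : Equiv.Perm (Fin n) // ham (α * β) (β * α) = k}

/-!
The Hamming metric is invariant under right multiplication. If `τ` commutes with `β`, then
`(ατ)β = (αβ)τ` and `β(ατ) = (βα)τ`, so `H((ατ)β, β(ατ)) = H(αβ, βα)`. Hence the permutations that
`k`-commute with `β` form a union of left cosets of the centralizer of `β`.
-/

open scoped Pointwise

theorem natCard_subgroup_dvd_natCard_of_mul_eq {G : Type*} [Group G] {H : Subgroup G} {s : Set G}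
    (hs : s * (H : Set G) = s) : Nat.card H ∣ Nat.card s :=
  ⟨_, by simpa only [hs] using H.card_mul_eq_card_subgroup_mul_card_quotient s⟩

theorem apply_mul_commute_right {G ι : Type*} [Semigroup G] {d : G → G → ι}
    (hd : ∀ σ τ c, d (σ * c) (τ * c) = d σ τ) {β τ : G} (hτ : Commute τ β) (α : G) :
    d (α * τ * β) (β * (α * τ)) = d (α * β) (β * α) :=
  calc d (α * τ * β) (β * (α * τ))
      = d (α * β * τ) (β * α * τ) := by simp only [mul_assoc, hτ.eq]
    _ = d (α * β) (β * α) := hd _ _ _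

theorem setOf_apply_mul_comm_mul_centralizer {G ι : Type*} [Group G] {d : G → G → ι}
    (hd : ∀ σ τ c, d (σ * c) (τ * c) = d σ τ) (β : G) (k : ι) :
    {α | d (α * β) (β * α) = k} * (Subgroup.centralizer {β} : Set G) =
      {α | d (α * β) (β * α) = k} := by
  refine (Set.mul_subset_iff.2 fun α hα τ hτ => ?_).antisymm
    (Set.subset_mul_left _ (one_mem (Subgroup.centralizer {β})))
  exact (apply_mul_commute_right hd (Subgroup.mem_centralizer_singleton_iff.1 hτ) α).trans hα

theorem hammingDist_comp_equiv {ι κ γ : Type*} [Fintype ι] [Fintype κ] [DecidableEq γ]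
    (e : ι ≃ κ) (f g : κ → γ) : hammingDist (f ∘ e) (g ∘ e) = hammingDist f g :=
  Finset.card_equiv e fun i => by simp only [Finset.mem_filter_univ, Function.comp_apply]

theorem ham_mul_right {n : ℕ} (σ τ c : Equiv.Perm (Fin n)) : ham (σ * c) (τ * c) = ham σ τ :=
  hammingDist_comp_equiv c σ τ

theorem stmt8_general {G ι : Type*} [Group G] {d : G → G → ι}
    (hd : ∀ σ τ c, d (σ * c) (τ * c) = d σ τ) (β : G) (k : ι) :
    Nat.card {τ : G // τ * β = β * τ} ∣ Nat.card {α : G // d (α * β) (β * α) = k} := by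
  simpa only [Subgroup.mem_centralizer_singleton_iff, Set.coe_ofPred] using
    natCard_subgroup_dvd_natCard_of_mul_eq (setOf_apply_mul_comm_mul_centralizer hd β k)

theorem stmt8 (n k : ℕ) (β : Equiv.Perm (Fin n)) :
    Nat.card {τ : Equiv.Perm (Fin n) // τ * β = β * τ} ∣ kcomm k β :=
  stmt8_general ham_mul_right β k
end

section
/- Let β be a permutation of {1,…,n} whose cycle type does not consist of distinct odd integers; that is (counting fixed points as cycles of length 1), either β has some cycle of even length or β has two cycles of the same length. Then for every nonnegative integer k, exactly one half of the permutations in C(k,β) are odd: the number of odd permutations α with H(αβ,βα) = k equals the number of even permutations α with H(αβ,βα) = k. In particular c(k,β) is even. -/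
/-!
If `γ` commutes with `β`, then `(γα)β = γ(αβ)` and `β(γα) = γ(βα)`, so left multiplication by `γ`
preserves `H(αβ, βα)`. When `γ` is odd it therefore exchanges the odd and the even permutations
that `k`-commute with `β`. An odd `γ` exists exactly when the centralizer of `β` is not contained in
the alternating group, which is what the condition on the cycle type of `β` says.
-/

theorem card_eq_card_and_eq_neg_one_add_card_and_eq_one {X : Type*} [Finite X] (f : X → ℤˣ)
    (p : X → Prop) :
    Nat.card {x // p x} = Nat.card {x // p x ∧ f x = -1} + Nat.card {x // p x ∧ f x = 1} := by
  have hdiff : {x | p x} \ {x | f x = -1} = {x | p x ∧ f x = 1} := by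
    ext x
    exact and_congr_right fun _ => Int.units_ne_iff_eq_neg.trans (by rw [neg_neg])
  have hsplit := Set.ncard_inter_add_ncard_sdiff_eq_ncard {x | p x} {x | f x = -1}
  rw [hdiff] at hsplit
  exact hsplit.symm

section SignCharacter

variable {G : Type*} [Group G] {χ : G →* ℤˣ} {γ : G} {p : G → Prop}

theorem card_and_map_eq_neg_one_eq_card_and_map_eq_one (hγ : χ γ = -1)
    (hp : ∀ g, p (γ * g) ↔ p g) :
    Nat.card {g // p g ∧ χ g = -1} = Nat.card {g // p g ∧ χ g = 1} := by
  refine Nat.card_congr ((Equiv.mulLeft γ).subtypeEquiv fun g => and_congr (hp g).symm ?_)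
  rw [Equiv.coe_mulLeft, map_mul, hγ, neg_one_mul, neg_eq_iff_eq_neg]

theorem even_card_of_map_eq_neg_one [Finite G] (hγ : χ γ = -1) (hp : ∀ g, p (γ * g) ↔ p g) :
    Even (Nat.card {g // p g}) := by
  rw [card_eq_card_and_eq_neg_one_add_card_and_eq_one χ p,
    card_and_map_eq_neg_one_eq_card_and_map_eq_one hγ hp]
  exact Even.add_self _

end SignCharacter

section Centralizer

variable {ι : Type*} [Fintype ι] [DecidableEq ι]

open Equiv.Perm

theorem hammingDist_mul_left_of_commute {γ β : Equiv.Perm ι} (h : Commute γ β)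
    (α : Equiv.Perm ι) :
    hammingDist ⇑(γ * α * β) ⇑(β * (γ * α)) = hammingDist ⇑(α * β) ⇑(β * α) := by
  rw [mul_assoc, ← h.left_comm]
  exact hammingDist_comp (fun _ => γ) fun _ => γ.injective

theorem exists_commute_sign_eq_neg_one_iff_not_centralizer_le {β : Equiv.Perm ι} :
    (∃ γ, Commute γ β ∧ sign γ = -1) ↔ ¬ Subgroup.centralizer {β} ≤ alternatingGroup ι := by
  simp only [SetLike.not_le_iff_exists, Subgroup.mem_centralizer_singleton_iff,
    mem_alternatingGroup, ← ne_eq, Int.units_ne_iff_eq_neg, commute_iff_eq]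

theorem card_fixed_add_sum_cycleType (β : Equiv.Perm ι) :
    (Finset.univ.filter fun x => β x = x).card + β.cycleType.sum = Fintype.card ι := by
  have hfixed : (Finset.univ.filter fun x => β x = x) = β.supportᶜ := by
    ext x
    simp
  rw [hfixed, sum_cycleType, Finset.card_compl_add_card]

theorem exists_commute_sign_eq_neg_one_iff {β : Equiv.Perm ι} :
    (∃ γ, Commute γ β ∧ sign γ = -1) ↔
      (∃ i ∈ β.cycleType, Even i) ∨ (∃ i, 2 ≤ β.cycleType.count i) ∨
        2 ≤ (Finset.univ.filter fun x => β x = x).card := by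
  have hcard := card_fixed_add_sum_cycleType β
  have hfixed : ¬ Fintype.card ι ≤ β.cycleType.sum + 1 ↔
      2 ≤ (Finset.univ.filter fun x => β x = x).card := by omega
  rw [exists_commute_sign_eq_neg_one_iff_not_centralizer_le, centralizer_le_alternating_iff,
    not_and_or, not_and_or, hfixed, or_comm (a := 2 ≤ _)]
  simp only [not_forall, exists_prop, Nat.not_odd_iff_even, not_le, Nat.lt_iff_add_one_le,
    Nat.reduceAdd]

end Centralizer

theorem stmt9_general {ι : Type*} [Fintype ι] [DecidableEq ι] (β : Equiv.Perm ι)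
    (h : (∃ i ∈ β.cycleType, Even i) ∨ (∃ i, 2 ≤ β.cycleType.count i) ∨
      2 ≤ (Finset.univ.filter fun x => β x = x).card)
    (k : ℕ) :
    Nat.card {α : Equiv.Perm ι //
        hammingDist ⇑(α * β) ⇑(β * α) = k ∧ Equiv.Perm.sign α = -1} =
      Nat.card {α : Equiv.Perm ι //
        hammingDist ⇑(α * β) ⇑(β * α) = k ∧ Equiv.Perm.sign α = 1} ∧
    Even (Nat.card {α : Equiv.Perm ι // hammingDist ⇑(α * β) ⇑(β * α) = k}) := by
  obtain ⟨γ, hcomm, hsign⟩ := exists_commute_sign_eq_neg_one_iff.mpr h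
  have hinv : ∀ α : Equiv.Perm ι, hammingDist ⇑(γ * α * β) ⇑(β * (γ * α)) = k ↔
      hammingDist ⇑(α * β) ⇑(β * α) = k := fun α => by
    rw [hammingDist_mul_left_of_commute hcomm]
  exact ⟨card_and_map_eq_neg_one_eq_card_and_map_eq_one hsign hinv,
    even_card_of_map_eq_neg_one hsign hinv⟩

/-- If the cycle type of `β` (fixed points counted as cycles of length 1) does not
consist of distinct odd integers, then exactly one half of the permutations
`k`-commuting with `β` are odd; in particular `c(k, β)` is even. -/
theorem stmt9 (n : ℕ) (β : Equiv.Perm (Fin n))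
    (h : (∃ i ∈ β.cycleType, Even i) ∨ (∃ i, 2 ≤ Multiset.count i β.cycleType) ∨
      2 ≤ (Finset.univ.filter fun x => β x = x).card)
    (k : ℕ) :
    Nat.card {α : Equiv.Perm (Fin n) //
        ham (α * β) (β * α) = k ∧ Equiv.Perm.sign α = -1} =
      Nat.card {α : Equiv.Perm (Fin n) //
        ham (α * β) (β * α) = k ∧ Equiv.Perm.sign α = 1} ∧
    Even (kcomm k β) :=
  stmt9_general β h k
end

section
/- Let α, β be permutations of {1,…,n}. If some β-orbit (a cycle of β, where fixed points of β are counted as singleton orbits) contains exactly one bad commuting point of α and β, then there exists a β-orbit containing at least two bad commuting points of α and β. -/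
/-!
Suppose that every `β`-orbit contains at most one bad commuting point. At a good point `x` we have
`α (β x) = β (α x)`, so `α x` and `α (β x)` share a `β`-orbit; at a bad point `x` the same holds
because one can walk from `β x` around the cycle back to `x` through good points only. Hence `α`
maps `β`-orbits into `β`-orbits. Since `β` moves only finitely many points, only finitely many pairs
of distinct points share a `β`-orbit, so `α` permutes these pairs and `α⁻¹` maps orbits into orbits
too. For a bad point `a`, the point `z` with `α (β z) = β (α a)` then lies in the `β`-orbit of `a`,
and it is a second bad point there: a contradiction.
-/

open Equiv Function

section SameCycleMap

variable {X Y : Type*} {σ : Perm X} {τ : Perm Y} {f : X → Y}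

theorem sameCycle_map_of_forall_sameCycle_apply (h : ∀ x, τ.SameCycle (f x) (f (σ x)))
    {x y : X} (hxy : σ.SameCycle x y) : τ.SameCycle (f x) (f y) := by
  obtain ⟨i, rfl⟩ := hxy
  induction i with
  | zero => exact .refl τ (f x)
  | succ i ih =>
    rw [add_comm, zpow_one_add, Perm.mul_apply]
    exact ih.trans (h _)
  | pred i ih =>
    have hstep := h ((σ ^ (-(i : ℤ) - 1)) x)
    rw [← Perm.mul_apply, ← zpow_one_add, add_sub_cancel] at hstep
    exact ih.trans hstep.symm

theorem sameCycle_map_apply_of_mem_periodicPts {x : X} (hx : x ∈ periodicPts σ)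
    (h : ∀ y, σ.SameCycle x y → y ≠ x → f (σ y) = τ (f y)) :
    τ.SameCycle (f x) (f (σ x)) := by
  have walk (k : ℕ) : τ.SameCycle (f (σ x)) (f ((σ ^ (k + 1)) x)) := by
    induction k with
    | zero => exact .refl τ _
    | succ k ih =>
      rw [pow_succ', Perm.mul_apply]
      by_cases hk : (σ ^ (k + 1)) x = x
      · rw [hk]
      · rw [h _ ⟨(k + 1 : ℕ), by rw [zpow_natCast]⟩ hk]
        exact ih.apply_right
  obtain ⟨m, hm, hper⟩ := hx
  have hreturn : (σ ^ (m - 1 + 1)) x = x := by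
    rwa [Nat.sub_add_cancel hm, Perm.coe_pow]
  simpa only [hreturn] using (walk (m - 1)).symm

end SameCycleMap

section FiniteSupport

theorem mem_periodicPts_of_finite_setOf_ne {X : Type*} {f : X → X} (hf : Injective f)
    (hfin : {x | f x ≠ x}.Finite) (x : X) : x ∈ periodicPts f := by
  by_cases hx : f x = x
  · exact mk_mem_periodicPts one_pos hx
  have hmoved (k : ℕ) : f (f^[k] x) ≠ f^[k] x := by
    rw [← iterate_succ_apply' f, iterate_succ_apply]
    exact (hf.iterate k).ne hx
  obtain ⟨m, k, hlt, heq⟩ := Set.Finite.exists_lt_map_eq_of_forall_mem hmoved hfin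
  exact mk_mem_periodicPts (Nat.sub_pos_of_lt hlt) (iterate_cancel hf heq.symm)

variable {X : Type*} {α β : Perm X}

theorem finite_setOf_ne_and_sameCycle (hβ : {x | β x ≠ x}.Finite) :
    {p : X × X | p.1 ≠ p.2 ∧ β.SameCycle p.1 p.2}.Finite :=
  (hβ.prod hβ).subset fun _ ⟨hne, hp⟩ ↦
    ⟨fun hfix ↦ hne (hp.eq_of_left hfix), fun hfix ↦ hne (hp.eq_of_right hfix)⟩

theorem sameCycle_apply_apply_iff_of_finite_setOf_ne (hβ : {x | β x ≠ x}.Finite)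
    (h : ∀ ⦃x y⦄, β.SameCycle x y → β.SameCycle (α x) (α y)) {x y : X} :
    β.SameCycle (α x) (α y) ↔ β.SameCycle x y := by
  refine ⟨fun hxy ↦ ?_, @h x y⟩
  obtain rfl | hne := eq_or_ne x y
  · rfl
  have := (finite_setOf_ne_and_sameCycle hβ).to_subtype
  have hmaps : Set.MapsTo (α.prodCongr α) {p | p.1 ≠ p.2 ∧ β.SameCycle p.1 p.2}
      {p | p.1 ≠ p.2 ∧ β.SameCycle p.1 p.2} :=
    fun p ⟨hp, hcycle⟩ ↦ ⟨α.injective.ne hp, h hcycle⟩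
  have hinv := Perm.perm_symm_mapsTo_of_mapsTo _ hmaps
    (show (α x, α y) ∈ _ from ⟨α.injective.ne hne, hxy⟩)
  simpa using hinv.2

end FiniteSupport

section BadCommutingPoint

variable {X : Type*} {α β : Perm X}

/-- A bad commuting point (b.c.p.) of `α` and `β`: a point at which `αβ` and `βα` differ. -/
def IsBadCommutingPoint (α β : Perm X) (a : X) : Prop :=
  (α * β) a ≠ (β * α) a

theorem sameCycle_map_of_subsingleton_isBadCommutingPoint (hper : ∀ x, x ∈ periodicPts β)
    (h : ∀ b, {x | β.SameCycle b x ∧ IsBadCommutingPoint α β x}.Subsingleton)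
    ⦃x y : X⦄ (hxy : β.SameCycle x y) : β.SameCycle (α x) (α y) := by
  refine sameCycle_map_of_forall_sameCycle_apply (fun a ↦ ?_) hxy
  by_cases ha : IsBadCommutingPoint α β a
  · refine sameCycle_map_apply_of_mem_periodicPts (hper a) fun b hab hne ↦ ?_
    by_contra hb
    exact hne (h a ⟨hab, hb⟩ ⟨.refl β a, ha⟩)
  · have hgood : α (β a) = β (α a) := not_not.mp ha
    rw [hgood]
    exact (Perm.SameCycle.refl β _).apply_right

theorem IsBadCommutingPoint.nontrivial_of_sameCycle_apply_iff {a : X}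
    (ha : IsBadCommutingPoint α β a)
    (hα : ∀ x y, β.SameCycle (α x) (α y) ↔ β.SameCycle x y) :
    {x | β.SameCycle a x ∧ IsBadCommutingPoint α β x}.Nontrivial := by
  obtain ⟨z, hz⟩ : ∃ z, α (β z) = β (α a) := (α * β).surjective _
  have haz : β.SameCycle a z := by
    rw [← Perm.sameCycle_apply_right, ← hα, hz]
    exact (Perm.SameCycle.refl β _).apply_right
  have hne : a ≠ z := by
    rintro rfl
    exact ha hz
  have hzbad : IsBadCommutingPoint α β z := fun hgood ↦
    hne ((β * α).injective (hz.symm.trans hgood))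
  exact ⟨a, ⟨.refl β a, ha⟩, z, ⟨haz, hzbad⟩, hne⟩

end BadCommutingPoint

theorem stmt11_general {X : Type*} {α β : Perm X} (hβ : {x | β x ≠ x}.Finite)
    (h : ∃ a, IsBadCommutingPoint α β a) :
    ∃ b, {x | β.SameCycle b x ∧ IsBadCommutingPoint α β x}.Nontrivial := by
  by_contra! hsub
  obtain ⟨a, ha⟩ := h
  have hmap := sameCycle_map_of_subsingleton_isBadCommutingPoint
    (mem_periodicPts_of_finite_setOf_ne β.injective hβ) hsub
  exact (ha.nontrivial_of_sameCycle_apply_iff fun _ _ ↦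
    sameCycle_apply_apply_iff_of_finite_setOf_ne hβ hmap).not_subsingleton (hsub a)

theorem stmt11 (n : ℕ) (α β : Equiv.Perm (Fin n))
    (h : ∃ a : Fin n, (Finset.univ.filter fun x : Fin n =>
        β.SameCycle a x ∧ (α * β) x ≠ (β * α) x).card = 1) :
    ∃ b : Fin n, 2 ≤ (Finset.univ.filter fun x : Fin n =>
        β.SameCycle b x ∧ (α * β) x ≠ (β * α) x).card := by
  obtain ⟨a, ha⟩ := h
  obtain ⟨x, hx⟩ := Finset.card_pos.mp (ha ▸ one_pos)
  obtain ⟨b, hb⟩ := stmt11_general (Set.toFinite _) ⟨x, (Finset.mem_filter.mp hx).2.2⟩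
  exact ⟨b, Finset.one_lt_card_iff_nontrivial.mpr
    (by rwa [Finset.Nontrivial, Finset.coe_filter_univ])⟩
end

section
/- Let β be a permutation of {1,…,n} and let k ≥ 1. There is no permutation α of {1,…,n} such that H(αβ,βα) = k and every β-orbit (cycle of β, with fixed points counted as singleton orbits) contains at most one bad commuting point of α and β; equivalently, the number of permutations α that k-commute with β in such a way that the k bad commuting points lie in k distinct cycles of β, one in each, is zero. -/
/-!
Suppose every `β`-orbit contains at most one bad commuting point. Starting just after the bad point
of a `β`-orbit (anywhere, if it has none), one can move `α` past `β` all the way around the orbit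
except for the closing step. Hence `α` sends this orbit to consecutive distinct points of a single
`β`-orbit, so the `β`-period of `α x` is at least that of `x`; when the two periods agree the
closing step commutes as well. Periods therefore never decrease along an `α`-orbit, and since
`α`-orbits are finite they are constant there, so no point is bad.
-/

open Function

section Semiconjugacy

variable {X Y : Type*} {f : X → Y} {ga : X → X} {gb : Y → Y} {x y : X}

/-- The points where `f` fails to semiconjugate `ga` to `gb`. For `f = α` and `ga = gb = β` these
are the bad commuting points of `α` and `β`; allowing `gb ≠ ga` keeps apart the orbit of a point and
the orbit of its image. -/
def badPts (f : X → Y) (ga : X → X) (gb : Y → Y) : Set X :=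
  {a | f (ga a) ≠ gb (f a)}

/-- `f` semiconjugates `ga` to `gb` once around the `ga`-orbit of `y`, starting from `y`. Since
`i < minimalPeriod ga y`, the step that closes the orbit is left out; the condition is vacuous
if `y` is not periodic, as then `minimalPeriod ga y = 0`. -/
def SemiconjOnPeriod (f : X → Y) (ga : X → X) (gb : Y → Y) (y : X) : Prop :=
  ∀ i < minimalPeriod ga y, f (ga^[i] y) = gb^[i] (f y)

theorem semiconjOnPeriod_of_forall_notMem_badPts
    (h : ∀ i, i + 1 < minimalPeriod ga y → ga^[i] y ∉ badPts f ga gb) :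
    SemiconjOnPeriod f ga gb y := by
  intro i hi
  induction i with
  | zero => rfl
  | succ i ih =>
    have hgood : f (ga (ga^[i] y)) = gb (f (ga^[i] y)) := not_not.1 (h i hi)
    rw [iterate_succ_apply', iterate_succ_apply', hgood, ih (Nat.lt_of_succ_lt hi)]

namespace SemiconjOnPeriod

theorem apply_iterate (h : SemiconjOnPeriod f ga gb y) (hy : y ∈ periodicPts ga) (n : ℕ) :
    f (ga^[n] y) = gb^[n % minimalPeriod ga y] (f y) := by
  rw [← iterate_mod_minimalPeriod_eq]
  exact h _ (Nat.mod_lt n (minimalPeriod_pos_of_mem_periodicPts hy))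

theorem minimalPeriod_apply_iterate (h : SemiconjOnPeriod f ga gb y) (hy : y ∈ periodicPts ga)
    (hfy : f y ∈ periodicPts gb) (n : ℕ) :
    minimalPeriod gb (f (ga^[n] y)) = minimalPeriod gb (f y) := by
  rw [h.apply_iterate hy, Function.minimalPeriod_apply_iterate hfy]

theorem minimalPeriod_le (h : SemiconjOnPeriod f ga gb y) (hf : Injective f)
    (hfy : f y ∈ periodicPts gb) : minimalPeriod ga y ≤ minimalPeriod gb (f y) := by
  by_contra! hlt
  have hfix : f (ga^[minimalPeriod gb (f y)] y) = f y := by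
    rw [h _ hlt, iterate_minimalPeriod]
  have hper : IsPeriodicPt ga (minimalPeriod gb (f y)) y := hf hfix
  exact hlt.not_ge (hper.minimalPeriod_le (minimalPeriod_pos_of_mem_periodicPts hfy))

theorem iterate_notMem_badPts (h : SemiconjOnPeriod f ga gb y) (hy : y ∈ periodicPts ga)
    (heq : minimalPeriod ga y = minimalPeriod gb (f y)) (n : ℕ) : ga^[n] y ∉ badPts f ga gb := by
  have hcomm (m : ℕ) : f (ga^[m] y) = gb^[m] (f y) := by
    rw [h.apply_iterate hy, heq, iterate_mod_minimalPeriod_eq]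
  have hgood : f (ga (ga^[n] y)) = gb (f (ga^[n] y)) := by
    rw [← iterate_succ_apply' ga, hcomm, hcomm, iterate_succ_apply']
  exact not_not.2 hgood

end SemiconjOnPeriod

theorem exists_semiconjOnPeriod (hx : x ∈ periodicPts ga)
    (h : {b ∈ badPts f ga gb | b ∈ periodicOrbit ga x}.Subsingleton) :
    ∃ y ∈ periodicPts ga, SemiconjOnPeriod f ga gb y ∧ ∃ n, ga^[n] y = x := by
  by_cases hbad : ∃ a ∈ badPts f ga gb, a ∈ periodicOrbit ga x
  · obtain ⟨a, ha, hax⟩ := hbad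
    obtain ⟨m, rfl⟩ := (mem_periodicOrbit_iff hx).1 hax
    set a := ga^[m] x
    have ha_per : a ∈ periodicPts ga := (bijOn_periodicPts ga).mapsTo.iterate m hx
    have horbit : periodicOrbit ga (ga a) = periodicOrbit ga x := by
      rw [periodicOrbit_apply_eq ha_per, periodicOrbit_apply_iterate_eq hx]
    have ha_next : ga a ∈ periodicPts ga := (bijOn_periodicPts ga).mapsTo ha_per
    refine ⟨ga a, ha_next, semiconjOnPeriod_of_forall_notMem_badPts fun i hi hi_bad ↦ ?_,
      (mem_periodicOrbit_iff ha_next).1 (horbit ▸ self_mem_periodicOrbit hx)⟩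
    have hmem : ga^[i] (ga a) ∈ periodicOrbit ga x := horbit ▸ iterate_mem_periodicOrbit ha_next i
    have hreturn : IsPeriodicPt ga (i + 1) a := h ⟨hi_bad, hmem⟩ ⟨ha, hax⟩
    rw [minimalPeriod_apply ha_per] at hi
    exact hi.not_ge (hreturn.minimalPeriod_le i.succ_pos)
  · push Not at hbad
    exact ⟨x, hx, semiconjOnPeriod_of_forall_notMem_badPts fun i _ hi ↦
      hbad _ hi (iterate_mem_periodicOrbit hx i), 0, rfl⟩

theorem minimalPeriod_le_minimalPeriod_apply (hf : Injective f) (hga : x ∈ periodicPts ga)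
    (hgb : ∀ z, z ∈ periodicPts gb)
    (h : {b ∈ badPts f ga gb | b ∈ periodicOrbit ga x}.Subsingleton) :
    minimalPeriod ga x ≤ minimalPeriod gb (f x) := by
  obtain ⟨y, hy, hsemi, n, rfl⟩ := exists_semiconjOnPeriod hga h
  rw [minimalPeriod_apply_iterate hy, hsemi.minimalPeriod_apply_iterate hy (hgb _)]
  exact hsemi.minimalPeriod_le hf (hgb _)

theorem notMem_badPts_of_minimalPeriod_eq (hga : x ∈ periodicPts ga)
    (hgb : ∀ z, z ∈ periodicPts gb)
    (h : {b ∈ badPts f ga gb | b ∈ periodicOrbit ga x}.Subsingleton)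
    (heq : minimalPeriod ga x = minimalPeriod gb (f x)) : x ∉ badPts f ga gb := by
  obtain ⟨y, hy, hsemi, n, rfl⟩ := exists_semiconjOnPeriod hga h
  rw [minimalPeriod_apply_iterate hy, hsemi.minimalPeriod_apply_iterate hy (hgb _)] at heq
  exact hsemi.iterate_notMem_badPts hy heq n

end Semiconjugacy

theorem eq_apply_of_forall_le_apply_of_mem_periodicPts {X P : Type*} [PartialOrder P]
    {f : X → X} {φ : X → P} {x : X} (hφ : ∀ z, φ z ≤ φ (f z)) (hx : x ∈ periodicPts f) :
    φ x = φ (f x) := by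
  have hmono : Monotone fun i ↦ φ (f^[i] x) :=
    monotone_nat_of_le_succ fun i ↦ by simpa only [iterate_succ_apply'] using hφ (f^[i] x)
  obtain ⟨m, hm, hper⟩ := hx
  refine (hφ x).antisymm ?_
  calc φ (f x) ≤ φ (f^[m] x) := hmono (Nat.one_le_of_lt hm)
    _ = φ x := by rw [hper.eq]

theorem sameCycle_of_mem_periodicOrbit {X : Type*} {β : Equiv.Perm X} {x b : X}
    (hx : x ∈ periodicPts β) (hb : b ∈ periodicOrbit β x) : β.SameCycle x b := by
  obtain ⟨n, rfl⟩ := (mem_periodicOrbit_iff hx).1 hb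
  exact ⟨n, by rw [zpow_natCast, Equiv.Perm.coe_pow]⟩

theorem ham_self {n : ℕ} (σ : Equiv.Perm (Fin n)) : ham σ σ = 0 := by
  simp [ham]

theorem stmt12_general {X : Type*} {α β : Equiv.Perm X} (hα : ∀ x, x ∈ periodicPts α)
    (hβ : ∀ x, x ∈ periodicPts β)
    (h : ∀ a, {x | β.SameCycle a x ∧ (α * β) x ≠ (β * α) x}.Subsingleton) : Commute α β := by
  have hbad (x : X) : {b ∈ badPts α β β | b ∈ periodicOrbit β x}.Subsingleton :=
    (h x).anti fun b hb ↦ ⟨sameCycle_of_mem_periodicOrbit (hβ x) hb.2, hb.1⟩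
  have hle (x : X) : minimalPeriod β x ≤ minimalPeriod β (α x) :=
    minimalPeriod_le_minimalPeriod_apply α.injective (hβ x) hβ (hbad x)
  have heq (x : X) : minimalPeriod β x = minimalPeriod β (α x) :=
    eq_apply_of_forall_le_apply_of_mem_periodicPts hle (hα x)
  exact Equiv.ext fun x ↦ not_not.1 (notMem_badPts_of_minimalPeriod_eq (hβ x) hβ (hbad x) (heq x))

/-- For `k ≥ 1` there is no permutation `α` that `k`-commutes with `β` in such a way
that every `β`-orbit contains at most one bad commuting point of `α` and `β`. -/
theorem stmt12 (n k : ℕ) (hk : 1 ≤ k) (β : Equiv.Perm (Fin n)) :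
    ¬ ∃ α : Equiv.Perm (Fin n), ham (α * β) (β * α) = k ∧
      ∀ a : Fin n, (Finset.univ.filter fun x : Fin n =>
        β.SameCycle a x ∧ (α * β) x ≠ (β * α) x).card ≤ 1 := by
  rintro ⟨α, rfl, h⟩
  have hcomm : Commute α β := stmt12_general α.injective.mem_periodicPts β.injective.mem_periodicPts
    fun a ↦ by simpa only [Finset.card_le_one_iff_subsingleton, Finset.coe_filter_univ] using h a
  exact Nat.one_le_iff_ne_zero.1 hk (hcomm.eq ▸ ham_self _)
end

section
/- Let n ≥ 2 and let β be an n-cycle in S_n (a single cycle whose support is all of {1,…,n}). Then for every integer k with 1 ≤ k ≤ n, the number T(k,n) of permutations α in S_n with H(αβ,βα) = k equals n · binom(n,k) · f(k). -/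
/-- `f k` is the number of `k`-cycles `σ` of `ℤ/kℤ` with `σ i ≠ i + 1` for all `i`
(OEIS A000757). -/
noncomputable def f (k : ℕ) : ℕ :=
  Nat.card {σ : Equiv.Perm (ZMod k) // σ.IsCycle ∧ (∀ x, σ x ≠ x) ∧ ∀ i, σ i ≠ i + 1}

/- Conjugating `β` by `α` turns the Hamming distance of `αβ` and `βα` into that of the full cycle
`αβα⁻¹` and `β`, and each full cycle arises from exactly `n` permutations `α`, one for each image
of a base point. The full cycles `g` that differ from `β` exactly on a `k`-set `S` correspond to
derangements `u` of `S` through `g = βu`. The first return map of `βu` to `S` is `cu`, where `c` is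
the first return map of `β`, and passing to first return maps preserves being a full cycle. Hence
these `g` are counted by the full cycles `cu` of `S` that nowhere agree with the full cycle `c`;
identifying `c` with the shift of `ℤ/kℤ`, their number is `f k`. -/

open Equiv Equiv.Perm Set

variable {X Y : Type*}

section FullCycles

variable {b g : Perm X}

theorem isCycleOn_univ_iff : g.IsCycleOn univ ↔ ∀ x y, g.SameCycle x y := by
  simp [IsCycleOn, Set.bijOn_univ, g.bijective]

theorem isCycleOn_univ_iff_isCycle_and_forall_ne [Nontrivial X] :
    g.IsCycleOn univ ↔ g.IsCycle ∧ ∀ x, g x ≠ x := by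
  constructor
  · intro h
    have hne : ∀ x, g x ≠ x := fun x => h.apply_ne nontrivial_univ (mem_univ x)
    exact ⟨isCycle_iff_exists_isCycleOn.2 ⟨univ, nontrivial_univ, h, fun x _ => mem_univ x⟩, hne⟩
  · rintro ⟨hg, hne⟩
    simpa only [hne, ne_eq, not_false_eq_true, ofPred_true] using hg.isCycleOn

theorem permCongr_zpow_apply_apply (e : X ≃ Y) (i : ℤ) (x : X) :
    (e.permCongr g ^ i) (e x) = e ((g ^ i) x) := by
  have hzpow : e.permCongr g ^ i = e.permCongr (g ^ i) := (map_zpow e.permCongrHom g i).symm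
  rw [hzpow, permCongr_apply, symm_apply_apply]

theorem sameCycle_permCongr (e : X ≃ Y) {x y : X} :
    SameCycle (e.permCongr g) (e x) (e y) ↔ SameCycle g x y :=
  exists_congr fun i => by rw [permCongr_zpow_apply_apply, e.apply_eq_iff_eq]

theorem isCycleOn_univ_permCongr (e : X ≃ Y) :
    (e.permCongr g).IsCycleOn univ ↔ g.IsCycleOn univ := by
  simp only [isCycleOn_univ_iff, ← e.forall_congr_right, sameCycle_permCongr]

theorem exists_zmod_equiv_permCongr_addRight_eq [Finite X] {n : ℕ} (hn : Nat.card X = n)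
    (hb : b.IsCycleOn univ) (x : X) :
    ∃ e : ZMod n ≃ X, e.permCongr (Equiv.addRight 1) = b ∧ e 0 = x := by
  have : Fintype X := Fintype.ofFinite X
  have : NeZero n := ⟨hn ▸ (Nat.card_pos_iff.2 ⟨⟨x⟩, ‹_›⟩).ne'⟩
  have hpow (i j : ℤ) : (b ^ i) x = (b ^ j) x ↔ (i : ZMod n) = j := by
    rw [ZMod.intCast_eq_intCast_iff, ← hn, Nat.card_eq_fintype_card, ← Finset.card_univ]
    exact IsCycleOn.zpow_apply_eq_zpow_apply (by simpa using hb) (Finset.mem_univ x)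
  let φ : ZMod n → X := fun i => (b ^ (i.cast : ℤ)) x
  have hφ : φ.Injective := fun i j hij => by simpa using (hpow _ _).1 hij
  have hφ_add_one (i : ZMod n) : φ (i + 1) = b (φ i) := by
    simp only [φ]
    rw [← Perm.mul_apply, ← zpow_one_add, hpow]
    simp [add_comm]
  let e : ZMod n ≃ X :=
    Equiv.ofBijective φ (hφ.bijective_of_nat_card_le (by rw [hn, Nat.card_zmod]))
  refine ⟨e, ?_, by simp [e, φ]⟩
  ext z
  obtain ⟨i, rfl⟩ := e.surjective z
  simpa [e] using hφ_add_one i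

theorem existsUnique_permCongr_eq_and_apply_eq [Finite X] [Finite Y] {h : Perm Y}
    (hcard : Nat.card X = Nat.card Y) (hb : b.IsCycleOn univ) (hh : h.IsCycleOn univ)
    (x : X) (y : Y) : ∃! a : X ≃ Y, a.permCongr b = h ∧ a x = y := by
  obtain ⟨e, he, he0⟩ := exists_zmod_equiv_permCongr_addRight_eq hcard hb x
  obtain ⟨e', he', he0'⟩ := exists_zmod_equiv_permCongr_addRight_eq rfl hh y
  have hexists : (e.symm.trans e').permCongr b = h ∧ (e.symm.trans e') x = y := by
    subst he he' he0 he0'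
    exact ⟨by ext; simp, by simp⟩
  refine ⟨e.symm.trans e', hexists, fun a ⟨ha, hax⟩ => ?_⟩
  ext z
  obtain ⟨i, rfl⟩ := isCycleOn_univ_iff.1 hb x z
  rw [← permCongr_zpow_apply_apply, ← permCongr_zpow_apply_apply, ha, hax, hexists.1, hexists.2]

theorem natCard_subtype_mul_mul_inv [Finite X] [Nonempty X] (hb : b.IsCycleOn univ)
    (P : Perm X → Prop) :
    Nat.card {a : Perm X // P (a * b * a⁻¹)} =
      Nat.card X * Nat.card {g : Perm X // g.IsCycleOn univ ∧ P g} := by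
  let x : X := Classical.arbitrary X
  have hconj (a : Perm X) : (a * b * a⁻¹).IsCycleOn univ := by
    rwa [← permCongr_eq_mul, isCycleOn_univ_permCongr]
  let φ : {a : Perm X // P (a * b * a⁻¹)} → X × {g : Perm X // g.IsCycleOn univ ∧ P g} :=
    fun a => (a.1 x, ⟨a.1 * b * a.1⁻¹, hconj a.1, a.2⟩)
  have hφ : φ.Bijective := by
    rw [Function.bijective_iff_existsUnique]
    rintro ⟨y, g, hg, hP⟩
    obtain ⟨a, ⟨rfl, rfl⟩, ha⟩ := existsUnique_permCongr_eq_and_apply_eq rfl hb hg x y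
    refine ⟨⟨a, hP⟩, rfl, fun a' ha' => Subtype.ext (ha _ ?_)⟩
    simpa [φ, and_comm] using ha'
  rw [← Nat.card_prod, Nat.card_congr (Equiv.ofBijective φ hφ)]

theorem natCard_isCycleOn_univ_forall_ne [Finite X] [Nonempty X] (hb : b.IsCycleOn univ) :
    Nat.card {g : Perm X // g.IsCycleOn univ ∧ ∀ x, g x ≠ b x} = f (Nat.card X) := by
  obtain ⟨e, rfl, -⟩ := exists_zmod_equiv_permCongr_addRight_eq rfl hb (Classical.arbitrary X)
  symm
  refine Nat.card_congr (e.permCongr.subtypeEquiv fun s => ?_)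
  rw [isCycleOn_univ_permCongr, ← e.forall_congr_right, ← and_assoc]
  simp only [permCongr_apply, symm_apply_apply, coe_addRight, ne_eq, e.apply_eq_iff_eq]
  refine and_congr_left fun hne => ?_
  have : Nontrivial (ZMod (Nat.card X)) := ⟨⟨_, _, hne 0⟩⟩
  exact isCycleOn_univ_iff_isCycle_and_forall_ne.symm

end FullCycles

section FirstReturn

variable {g b : Perm X} {p : X → Prop}

/-- The return time of a point `x` to the set cut out by `p` under `g`: the least `m > 0` with
`p ((g ^ m) x)`, with junk value `0` if there is none. -/
noncomputable def returnTime (g : Perm X) (p : X → Prop) (x : X) : ℕ :=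
  sInf {m | 0 < m ∧ p ((g ^ m) x)}

theorem returnTime_le {x : X} {m : ℕ} (hm : 0 < m) (hp : p ((g ^ m) x)) : returnTime g p x ≤ m :=
  Nat.sInf_le ⟨hm, hp⟩

theorem pow_mul_ofSubtype_apply [DecidablePred p] (u : Perm (Subtype p)) {x : Subtype p}
    {m : ℕ} (hm : m < returnTime b p (u x)) :
    ((b * ofSubtype u) ^ (m + 1)) x = (b ^ (m + 1)) (u x) := by
  induction m with
  | zero => simp
  | succ m ih =>
    have hp : ¬p ((b ^ (m + 1)) (u x)) := fun h => hm.not_ge (returnTime_le m.succ_pos h)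
    rw [pow_succ', Perm.mul_apply, ih (by omega), Perm.mul_apply, ofSubtype_apply_of_not_mem u hp,
      ← Perm.mul_apply, ← pow_succ']

theorem exists_mul_ofSubtype_pow_apply [DecidablePred p] (u : Perm (Subtype p)) {x : X}
    (hx : ∃ m : ℕ, p ((b ^ m) x)) :
    ∃ m : ℕ, p (((b * ofSubtype u) ^ m) x) := by
  by_contra! hne
  have hpow (m : ℕ) : ((b * ofSubtype u) ^ m) x = (b ^ m) x := by
    induction m with
    | zero => rfl
    | succ m ih =>
      rw [pow_succ', Perm.mul_apply, Perm.mul_apply, ofSubtype_apply_of_not_mem u (hne m), ih,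
        pow_succ', Perm.mul_apply]
  obtain ⟨m, hm⟩ := hx
  exact hne m (hpow m ▸ hm)

variable [Finite X]

theorem returnTime_spec (g : Perm X) (x : Subtype p) :
    0 < returnTime g p x ∧ p ((g ^ returnTime g p x) x) :=
  Nat.sInf_mem (s := {m | 0 < m ∧ p ((g ^ m) x)})
    ⟨orderOf g, orderOf_pos g, by simpa [pow_orderOf_eq_one] using x.2⟩

theorem injective_pow_returnTime_apply (g : Perm X) (p : X → Prop) :
    Function.Injective fun x : Subtype p =>
      (⟨(g ^ returnTime g p x) x, (returnTime_spec g x).2⟩ : Subtype p) := by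
  suffices ∀ x y : Subtype p, returnTime g p x ≤ returnTime g p y →
      (g ^ returnTime g p x) x = (g ^ returnTime g p y) y → x = y by
    intro x y hxy
    rw [Subtype.mk.injEq] at hxy
    rcases le_total (returnTime g p x) (returnTime g p y) with hle | hle
    · exact this x y hle hxy
    · exact (this y x hle hxy.symm).symm
  -- If the return times differed by `d > 0`, then `y` would already return at time `d`, to `x`.
  intro x y hle hxy
  obtain ⟨d, hd⟩ := Nat.exists_eq_add_of_le hle
  have hx : x = (g ^ d) y := by
    rw [hd, pow_add, Perm.mul_apply] at hxy
    exact (g ^ _).injective hxy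
  obtain rfl | hpos := d.eq_zero_or_pos
  · exact Subtype.ext hx
  · have := returnTime_le hpos (hx ▸ x.2)
    have := (returnTime_spec g x).1
    omega

/-- The first return map of `g` to the set cut out by `p`, also called the permutation that `g`
induces there: each point goes to the next point of its `g`-orbit that satisfies `p`. -/
noncomputable def firstReturn (g : Perm X) (p : X → Prop) : Perm (Subtype p) :=
  Equiv.ofBijective _ (Finite.injective_iff_bijective.1 (injective_pow_returnTime_apply g p))

theorem coe_firstReturn_apply (g : Perm X) (x : Subtype p) :
    (firstReturn g p x : X) = (g ^ returnTime g p x) x := rfl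

theorem sameCycle_coe_of_sameCycle_firstReturn {x y : Subtype p}
    (h : SameCycle (firstReturn g p) x y) : SameCycle g x y := by
  obtain ⟨m, rfl⟩ := h.exists_nat_pow_eq
  induction m with
  | zero => rfl
  | succ m ih =>
    rw [pow_succ', Perm.mul_apply, coe_firstReturn_apply, sameCycle_pow_right]
    exact ih ⟨m, rfl⟩

theorem sameCycle_firstReturn {x y : Subtype p} :
    SameCycle (firstReturn g p) x y ↔ SameCycle g x y := by
  refine ⟨sameCycle_coe_of_sameCycle_firstReturn, fun h => ?_⟩
  obtain ⟨m, hm⟩ := h.exists_nat_pow_eq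
  clear h
  induction m using Nat.strong_induction_on generalizing x with
  | _ m ih =>
    obtain rfl | hpos := m.eq_zero_or_pos
    · obtain rfl : x = y := Subtype.ext hm
      rfl
    · obtain ⟨d, hd⟩ := Nat.exists_eq_add_of_le' (returnTime_le hpos (hm ▸ y.2))
      rw [← sameCycle_apply_left]
      refine ih d ?_ ?_
      · have := (returnTime_spec g x).1
        omega
      · rw [coe_firstReturn_apply, ← Perm.mul_apply, ← pow_add, ← hd, hm]

theorem isCycleOn_univ_firstReturn_iff (hp : ∀ x, ∃ m : ℕ, p ((g ^ m) x)) :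
    (firstReturn g p).IsCycleOn univ ↔ g.IsCycleOn univ := by
  simp only [isCycleOn_univ_iff, sameCycle_firstReturn]
  refine ⟨fun h x y => ?_, fun h x y => h x y⟩
  obtain ⟨m, hm⟩ := hp x
  obtain ⟨n, hn⟩ := hp y
  simpa using h ⟨_, hm⟩ ⟨_, hn⟩

theorem returnTime_mul_ofSubtype [DecidablePred p] (b : Perm X) (u : Perm (Subtype p))
    (x : Subtype p) :
    returnTime (b * ofSubtype u) p x = returnTime b p (u x) := by
  obtain ⟨hpos, hret⟩ := returnTime_spec b (u x)
  obtain ⟨hpos', hret'⟩ := returnTime_spec (b * ofSubtype u) x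
  obtain ⟨m, hm⟩ := Nat.exists_eq_add_of_le' hpos
  obtain ⟨m', hm'⟩ := Nat.exists_eq_add_of_le' hpos'
  have hle : returnTime (b * ofSubtype u) p x ≤ returnTime b p (u x) := by
    refine returnTime_le hpos ?_
    rwa [hm, pow_mul_ofSubtype_apply u (by omega), ← hm]
  refine hle.antisymm (returnTime_le hpos' ?_)
  rwa [hm', ← pow_mul_ofSubtype_apply u (by omega), ← hm']

theorem firstReturn_mul_ofSubtype [DecidablePred p] (b : Perm X) (u : Perm (Subtype p)) :
    firstReturn (b * ofSubtype u) p = firstReturn b p * u := by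
  ext x
  obtain ⟨m, hm⟩ := Nat.exists_eq_add_of_le' (returnTime_spec b (u x)).1
  rw [Perm.mul_apply, coe_firstReturn_apply, coe_firstReturn_apply, returnTime_mul_ofSubtype, hm,
    pow_mul_ofSubtype_apply u (by omega)]

theorem isCycleOn_univ_mul_ofSubtype_iff [DecidablePred p] (hb : b.IsCycleOn univ) (hp : ∃ x, p x)
    (u : Perm (Subtype p)) :
    (b * ofSubtype u).IsCycleOn univ ↔ (firstReturn b p * u).IsCycleOn univ := by
  obtain ⟨y, hy⟩ := hp
  have hb_meets (x : X) : ∃ m : ℕ, p ((b ^ m) x) := by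
    obtain ⟨m, rfl⟩ := (isCycleOn_univ_iff.1 hb x y).exists_nat_pow_eq
    exact ⟨m, hy⟩
  rw [← firstReturn_mul_ofSubtype, isCycleOn_univ_firstReturn_iff
    fun x => exists_mul_ofSubtype_pow_apply u (hb_meets x)]

theorem natCard_isCycleOn_univ_forall_ne_iff (hb : b.IsCycleOn univ) (hp : ∃ x, p x) :
    Nat.card {g : Perm X // g.IsCycleOn univ ∧ ∀ x, g x ≠ b x ↔ p x} =
      f (Nat.card (Subtype p)) := by
  classical
  have : Nonempty (Subtype p) := nonempty_subtype.2 hp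
  let c := firstReturn b p
  have hc : c.IsCycleOn univ := by
    simpa [c] using (isCycleOn_univ_mul_ofSubtype_iff hb hp 1).1 (by simpa using hb)
  rw [← natCard_isCycleOn_univ_forall_ne hc]
  symm
  calc
    Nat.card {s : Perm (Subtype p) // s.IsCycleOn univ ∧ ∀ x, s x ≠ c x}
    _ = Nat.card {u : Perm (Subtype p) // u ∈ derangements _ ∧ (c * u).IsCycleOn univ} := by
      refine Nat.card_congr ((Equiv.mulLeft c).subtypeEquiv fun u => ?_).symm
      simp [derangements, and_comm]
    _ = Nat.card {u : derangements (Subtype p) // (c * u.1).IsCycleOn univ} :=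
      Nat.card_congr (subtypeSubtypeEquivSubtypeInter _ _).symm
    _ = Nat.card {v : {v : Perm X // ∀ x, ¬p x ↔ x ∈ Function.fixedPoints v} //
          (b * v.1).IsCycleOn univ} :=
      Nat.card_congr <| (derangements.subtypeEquiv p).subtypeEquiv fun u =>
        (isCycleOn_univ_mul_ofSubtype_iff hb hp u).symm
    _ = Nat.card {v : Perm X // (∀ x, ¬p x ↔ x ∈ Function.fixedPoints v) ∧
          (b * v).IsCycleOn univ} :=
      Nat.card_congr (subtypeSubtypeEquivSubtypeInter _ fun v => (b * v).IsCycleOn univ)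
    _ = Nat.card {g : Perm X // g.IsCycleOn univ ∧ ∀ x, g x ≠ b x ↔ p x} := by
      refine Nat.card_congr ((Equiv.mulLeft b).subtypeEquiv fun v => ?_)
      have hfix (x : X) : (¬p x ↔ v x = x) ↔ (v x ≠ x ↔ p x) := not_iff_comm
      simp [Function.IsFixedPt, and_comm, hfix]

end FirstReturn

theorem natCard_subtype_and_card_eq {A : Type*} [Finite A] [Fintype X] {P : A → Prop}
    {D : A → Finset X} {k m : ℕ}
    (h : ∀ S : Finset X, S.card = k → Nat.card {a // P a ∧ D a = S} = m) :
    Nat.card {a // P a ∧ (D a).card = k} = (Fintype.card X).choose k * m := by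
  let e : {a // P a ∧ (D a).card = k} ≃
      Σ S : {S : Finset X // S.card = k}, {a // P a ∧ D a = S} :=
    { toFun a := ⟨⟨D a, a.2.2⟩, a, a.2.1, rfl⟩
      invFun a := ⟨a.2, a.2.2.1, a.2.2.2.symm ▸ a.1.2⟩
      right_inv := by
        rintro ⟨⟨S, hS⟩, a, ha, haS⟩
        obtain rfl : D a = S := haS
        rfl }
  rw [Nat.card_congr e, Nat.card_sigma, Finset.sum_congr rfl fun S _ => h S.1 S.2]
  simp

theorem hammingDist_comp_equiv_s14 {Z : Type*} [Fintype X] [Fintype Y] [DecidableEq Z] (σ τ : Y → Z)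
    (e : X ≃ Y) : hammingDist (σ ∘ e) (τ ∘ e) = hammingDist σ τ :=
  Finset.card_equiv e (by simp)

theorem stmt14_general [Fintype X] [DecidableEq X] {b : Perm X} (hb : b.IsCycleOn univ)
    (k : ℕ) [NeZero k] :
    Nat.card {a : Perm X // hammingDist ⇑(a * b) ⇑(b * a) = k} =
      Fintype.card X * (Fintype.card X).choose k * f k := by
  cases isEmpty_or_nonempty X
  · simp [hammingDist, (NeZero.ne k).symm]
  have hham (a : Perm X) : hammingDist ⇑(a * b) ⇑(b * a) = hammingDist ⇑(a * b * a⁻¹) ⇑b := by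
    simpa [← coe_mul] using hammingDist_comp_equiv_s14 ⇑(a * b * a⁻¹) ⇑b a
  simp only [hham]
  rw [natCard_subtype_mul_mul_inv hb (P := fun g => hammingDist ⇑g ⇑b = k),
    Nat.card_eq_fintype_card, mul_assoc]
  congr 1
  refine natCard_subtype_and_card_eq fun S hS => ?_
  have hne : S.Nonempty := Finset.card_ne_zero.1 (hS ▸ NeZero.ne k)
  simpa [Finset.ext_iff, hS] using natCard_isCycleOn_univ_forall_ne_iff (p := (· ∈ S)) hb hne

theorem stmt14 (n : ℕ) (hn : 2 ≤ n) (β : Equiv.Perm (Fin n))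
    (hβ : β.IsCycle ∧ β.support = Finset.univ)
    (k : ℕ) (hk1 : 1 ≤ k) (hkn : k ≤ n) :
    kcomm k β = n * Nat.choose n k * f k := by
  have : NeZero k := ⟨by omega⟩
  have hcycle : β.IsCycleOn univ := by
    simpa [← coe_support_eq_set_support, hβ.2] using hβ.1.isCycleOn
  simpa [kcomm, ham, hammingDist] using stmt14_general hcycle k
end

section
/- Let m be a fixed nonnegative integer. Then the limit as n → ∞ of n·binom(n, n−m)·f(n−m)/n! equals e^{−1}/m!; that is, the proportion T(n−m,n)/n! of permutations that (n−m)-commute with an n-cycle tends to e^{−1}/m!, where T(k,n) = n·binom(n,k)·f(k). -/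
/-
Choosing a point `x` of a cyclic permutation `σ` and deleting `σ x` from the cycle sets up a
bijection between the cyclic permutations of `U` agreeing with a given cycle `c` at `x` and the
cyclic permutations of `U \ {c x}`, and it turns coincidences with `c` into coincidences with the
correspondingly shortened `c`. Hence the numbers `g (n, a)` of cyclic permutations of `n + 1` points
that avoid `c` at `a` prescribed points satisfy `g (n, 0) = n!` and
`g (n, a + 1) = g (n, a) - g (n - 1, a)`: they form the difference table of the factorials, whose
entry at `a = n` is the derangement number `D n`. One more deletion step, imposing the condition at
the last of the `n + 1` points, gives `f (n + 1) = D n - f n`. Since `D n / n! → e⁻¹` and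
`f n ≤ D (n - 1)`, also `f (n + 1) / n! → e⁻¹`, and the theorem follows from
`T (k, k + m) / (k + m)! = (1 / m!) * ((k + m) / k) * (f k / (k - 1)!)`.
-/

open Filter

/-- `T k n = n * C(n, k) * f(k)` is the number of permutations that `k`-commute
with an `n`-cycle. -/
noncomputable def T (k n : ℕ) : ℕ := n * Nat.choose n k * f k

open Equiv Equiv.Perm Finset
open scoped Nat Topology

lemma fwdDiff_iter_factorial_zero (n : ℕ) :
    (fwdDiff 1)^[n] (fun k : ℕ ↦ (k ! : ℤ)) 0 = numDerangements n := by
  rw [fwdDiff_iter_eq_sum_shift, numDerangements_sum, ← sum_range_reflect]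
  refine sum_congr rfl fun k hk ↦ ?_
  have hkn : k ≤ n := mem_range_succ_iff.1 hk
  rw [Nat.ascFactorial_eq_factorial_mul_choose, Nat.add_sub_cancel' hkn]
  simp only [Nat.add_sub_cancel, Nat.sub_sub_self hkn, zero_add, smul_eq_mul, mul_one,
    Nat.choose_symm hkn]
  push_cast
  ring

lemma map_swap_erase {α : Type*} [DecidableEq α] {U : Finset α} {a b : α} (ha : a ∈ U)
    (hb : b ∈ U) : (U.erase a).map (swap a b).toEmbedding = U.erase b := by
  have map_swap : U.map (swap a b).toEmbedding = U :=
    map_perm fun x hx ↦ by rcases eq_or_eq_of_swap_apply_ne_self hx with rfl | rfl <;> assumption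
  rw [map_erase, map_swap, coe_toEmbedding, swap_apply_left]

section SameCycle

variable {α β : Type*}

lemma sameCycle_map_of_sameCycle_apply {σ : Perm α} {τ : Perm β} {r : α → β}
    (hr : ∀ x, τ.SameCycle (r x) (r (σ x))) {x y : α} (hxy : σ.SameCycle x y) :
    τ.SameCycle (r x) (r y) := by
  obtain ⟨n, rfl⟩ := hxy
  induction n with
  | zero => exact .rfl
  | succ n ih => rw [add_comm, zpow_one_add, mul_apply]; exact ih.trans (hr _)
  | pred n ih =>
    rw [sub_eq_neg_add, zpow_add, zpow_neg_one, mul_apply]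
    exact ih.trans (by simpa using (hr (σ⁻¹ ((σ ^ (-n : ℤ)) x))).symm)

variable [DecidableEq α]

lemma sameCycle_swap_apply {σ : Perm α} {a b : α} (hab : σ.SameCycle a b) (x : α) :
    σ.SameCycle x (swap a b x) := by
  rw [swap_apply_def]
  split_ifs with hxa hxb
  exacts [hxa ▸ hab, hxb ▸ hab.symm, .rfl]

-- `σ * swap a b` skips `b = σ a` in its cycle; the update retracts `b` onto its predecessor `a`.
lemma sameCycle_mul_swap_iff {σ : Perm α} {a b x y : α} (hab : σ a = b) :
    (σ * swap a b).SameCycle (Function.update id b a x) (Function.update id b a y) ↔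
      σ.SameCycle x y := by
  set r := Function.update id b a
  have r_of_ne {z : α} (hz : z ≠ b) : r z = z := by simp [r, hz]
  have sameCycle_a_b : σ.SameCycle a b := hab ▸ .apply_right .rfl
  constructor
  · have sameCycle_r (z : α) : σ.SameCycle z (r z) := by
      rcases eq_or_ne z b with rfl | hz
      · simpa [r] using sameCycle_a_b.symm
      · rw [r_of_ne hz]
    have sameCycle_step (z : α) : σ.SameCycle z ((σ * swap a b) z) :=
      .apply_right (sameCycle_swap_apply sameCycle_a_b z)
    exact fun h ↦ (sameCycle_r x).trans
      ((sameCycle_map_of_sameCycle_apply (r := id) sameCycle_step h).trans (sameCycle_r y).symm)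
  · refine sameCycle_map_of_sameCycle_apply fun z ↦ ?_
    rcases eq_or_ne z a with rfl | hza
    · have r_a : r z = z := by rcases eq_or_ne z b with rfl | hz <;> simp [r, *]
      have r_apply : r (σ z) = z := by simp [r, hab]
      rw [r_a, r_apply]
    · have swap_r : swap a b (r z) = z := by
        rcases eq_or_ne z b with rfl | hz
        · simp [r]
        · rw [r_of_ne hz, swap_apply_of_ne_of_ne hza hz]
      have r_apply : r (σ z) = (σ * swap a b) (r z) := by
        rw [mul_apply, swap_r, r_of_ne fun h ↦ hza (σ.injective (h.trans hab.symm))]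
      rw [r_apply]
      exact .apply_right .rfl

end SameCycle

section CyclicPerms

variable {α : Type*} [Fintype α] [DecidableEq α] {U : Finset α} {σ : Perm α} {a b : α}

open scoped Classical in
/-- The permutations that permute the points of `U` in a single cycle and fix all other points.
Unlike for `Equiv.Perm.IsCycle`, the identity is cyclic on a set of at most one point. -/
noncomputable def cyclicPerms (U : Finset α) : Finset (Perm α) :=
  {σ | σ.IsCycleOn U ∧ ∀ x ∉ U, σ x = x}

lemma mem_cyclicPerms :
    σ ∈ cyclicPerms U ↔ (∀ x ∈ U, ∀ y ∈ U, σ.SameCycle x y) ∧ ∀ x ∉ U, σ x = x := by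
  simp only [cyclicPerms, mem_filter_univ, IsCycleOn, SetLike.mem_coe, and_assoc]
  refine and_iff_right_of_imp fun ⟨_, hfix⟩ ↦
    σ.bijOn fun x ↦ not_iff_not.1 ⟨fun hx ↦ ?_, fun hx ↦ ?_⟩
  · rwa [σ.injective (hfix _ hx)] at hx
  · rwa [hfix x hx]

lemma apply_mem_of_mem_cyclicPerms (hσ : σ ∈ cyclicPerms U) (ha : a ∈ U) : σ a ∈ U := by
  classical
  exact (mem_filter_univ _ |>.1 hσ).1.1.mapsTo ha

lemma apply_ne_of_mem_cyclicPerms (hσ : σ ∈ cyclicPerms U) (hU : 1 < #U) (ha : a ∈ U) :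
    σ a ≠ a := by
  classical
  exact (mem_filter_univ _ |>.1 hσ).1.apply_ne (one_lt_card_iff_nontrivial.1 hU) ha

lemma mul_swap_mem_cyclicPerms_erase_iff (ha : a ∈ U) (hb : b ∈ U) (hab : a ≠ b) :
    σ * swap a b ∈ cyclicPerms (U.erase b) ↔ σ ∈ cyclicPerms U ∧ σ a = b := by
  have apply_eq_of_mem (h : σ * swap a b ∈ cyclicPerms (U.erase b)) : σ a = b := by
    simpa using (mem_cyclicPerms.1 h).2 b (notMem_erase b U)
  refine (and_iff_left_of_imp apply_eq_of_mem).symm.trans (and_congr_left fun hσ ↦ ?_)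
  have update_of_mem {x : α} (hx : x ∈ U.erase b) : Function.update id b a x = x := by
    simp [ne_of_mem_erase hx]
  have update_mem {x : α} (hx : x ∈ U) : Function.update id b a x ∈ U.erase b := by
    rcases eq_or_ne x b with rfl | hxb <;> simp [*]
  rw [mem_cyclicPerms, mem_cyclicPerms]
  refine and_congr ⟨fun h x hx y hy ↦ ?_, fun h x hx y hy ↦ ?_⟩
    ⟨fun h x hx ↦ ?_, fun h x hx ↦ ?_⟩
  · exact (sameCycle_mul_swap_iff hσ).1 (h _ (update_mem hx) _ (update_mem hy))
  · rw [← update_of_mem hx, ← update_of_mem hy, sameCycle_mul_swap_iff hσ]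
    exact h x (mem_of_mem_erase hx) y (mem_of_mem_erase hy)
  · simpa [swap_apply_of_ne_of_ne (ne_of_mem_of_not_mem ha hx).symm
      (ne_of_mem_of_not_mem hb hx).symm] using h x (fun hx' ↦ hx (mem_of_mem_erase hx'))
  · rcases eq_or_ne x b with rfl | hxb
    · simpa using hσ
    · have hxU : x ∉ U := fun hxU ↦ hx (mem_erase_of_ne_of_mem hxb hxU)
      rw [mul_apply, swap_apply_of_ne_of_ne (ne_of_mem_of_not_mem ha hxU).symm hxb, h x hxU]

lemma card_cyclicPerms_filter_apply_eq (ha : a ∈ U) (hb : b ∈ U) (hab : a ≠ b) :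
    #{σ ∈ cyclicPerms U | σ a = b} = #(cyclicPerms (U.erase b)) :=
  card_equiv (Equiv.mulRight (swap a b)) fun σ ↦ by
    rw [mem_filter, coe_mulRight, mul_swap_mem_cyclicPerms_erase_iff ha hb hab]

lemma cyclicPerms_singleton (a : α) : cyclicPerms {a} = {1} := by
  ext σ
  simp only [cyclicPerms, mem_filter_univ, coe_singleton, isCycleOn_singleton, mem_singleton,
    Perm.ext_iff, one_apply]
  exact ⟨fun ⟨ha, hfix⟩ x ↦ (eq_or_ne x a).elim (· ▸ ha) (hfix x), fun h ↦ ⟨h a, fun x _ ↦ h x⟩⟩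

lemma card_cyclicPerms {n : ℕ} (hU : #U = n + 1) : #(cyclicPerms U) = n ! := by
  induction n generalizing U with
  | zero =>
    obtain ⟨a, rfl⟩ := card_eq_one.1 hU
    rw [cyclicPerms_singleton, card_singleton, Nat.factorial_zero]
  | succ n ih =>
    obtain ⟨a, ha⟩ : U.Nonempty := card_pos.1 (by lia)
    have apply_mem : ∀ σ ∈ cyclicPerms U, σ a ∈ U.erase a := fun σ hσ ↦
      mem_erase.2 ⟨apply_ne_of_mem_cyclicPerms hσ (by lia) ha, apply_mem_of_mem_cyclicPerms hσ ha⟩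
    calc #(cyclicPerms U)
      _ = ∑ b ∈ U.erase a, #{σ ∈ cyclicPerms U | σ a = b} := card_eq_sum_card_fiberwise apply_mem
      _ = #(U.erase a) * n ! := sum_const_nat fun b hb ↦ by
        have hbU := mem_of_mem_erase hb
        rw [card_cyclicPerms_filter_apply_eq ha hbU (ne_of_mem_erase hb).symm,
          ih (by rw [card_erase_of_mem hbU, hU, Nat.add_sub_cancel])]
      _ = (n + 1)! := by
        rw [card_erase_of_mem ha, hU, Nat.add_sub_cancel, Nat.factorial_succ]

/-- The cyclic permutations of `U` that differ from `c` at every point of `A`; `f n` counts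
them for `U = A = ℤ/nℤ` and `c = (x ↦ x + 1)`. -/
noncomputable def cyclicPermsAvoiding (U : Finset α) (c : Perm α) (A : Finset α) :
    Finset (Perm α) :=
  {σ ∈ cyclicPerms U | ∀ x ∈ A, σ x ≠ c x}

lemma card_cyclicPermsAvoiding_insert_add_card_erase {c : Perm α} (A : Finset α)
    (hc : c ∈ cyclicPerms U) (ha : a ∈ U) (hca : c a ≠ a) :
    #(cyclicPermsAvoiding U c (insert a A)) +
        #(cyclicPermsAvoiding (U.erase (c a)) (c * swap a (c a))
          (A.map (swap a (c a)).toEmbedding)) =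
      #(cyclicPermsAvoiding U c A) := by
  rw [← card_filter_add_card_filter_not (s := cyclicPermsAvoiding U c A)
    (fun σ : Perm α ↦ σ a ≠ c a)]
  congr 1
  · congr 1
    ext σ
    simp only [cyclicPermsAvoiding, mem_filter, forall_mem_insert]
    tauto
  · refine (card_equiv (Equiv.mulRight (swap a (c a))) fun σ ↦ ?_).symm
    simp only [cyclicPermsAvoiding, mem_filter, not_not, coe_mulRight, forall_mem_map,
      mul_swap_mem_cyclicPerms_erase_iff ha (apply_mem_of_mem_cyclicPerms hc ha) hca.symm,
      mul_apply, coe_toEmbedding, swap_apply_self]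
    tauto

lemma card_cyclicPermsAvoiding {c : Perm α} {A : Finset α} {m : ℕ} (hc : c ∈ cyclicPerms U)
    (hA : A ⊆ U) (hU : #U = m + #A + 1) :
    (#(cyclicPermsAvoiding U c A) : ℤ) = (fwdDiff 1)^[#A] (fun n : ℕ ↦ (n ! : ℤ)) m := by
  induction hn : #A generalizing U A c m with
  | zero =>
    rw [card_eq_zero.1 hn] at hU ⊢
    simp [cyclicPermsAvoiding, card_cyclicPerms hU]
  | succ n ih =>
    obtain ⟨a, B, haB, rfl, hB⟩ := card_eq_succ.1 hn
    obtain ⟨ha, hBU⟩ := insert_subset_iff.1 hA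
    have hca := apply_ne_of_mem_cyclicPerms hc (by lia) ha
    have hcaU := apply_mem_of_mem_cyclicPerms hc ha
    have map_subset : B.map (swap a (c a)).toEmbedding ⊆ U.erase (c a) :=
      (map_subset_map.2 (subset_erase.2 ⟨hBU, haB⟩)).trans_eq (map_swap_erase ha hcaU)
    have recursion := card_cyclicPermsAvoiding_insert_add_card_erase B hc ha hca
    rw [Function.iterate_succ_apply', fwdDiff, ← ih hc hBU (by lia) hB,
      ← ih ((mul_swap_mem_cyclicPerms_erase_iff ha hcaU hca.symm).2 ⟨hc, rfl⟩) map_subset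
        (by rw [card_erase_of_mem hcaU, card_map]; lia) (by rw [card_map, hB]), ← recursion]
    push_cast
    ring

lemma card_cyclicPermsAvoiding_self_add_card_erase {c : Perm α} {n : ℕ} (hc : c ∈ cyclicPerms U)
    (ha : a ∈ U) (hca : c a ≠ a) (hU : #U = n + 1) :
    #(cyclicPermsAvoiding (U.erase (c a)) (c * swap a (c a)) (U.erase (c a))) +
      #(cyclicPermsAvoiding U c U) = numDerangements n := by
  have card_erase : #(U.erase a) = n := by rw [card_erase_of_mem ha, hU, Nat.add_sub_cancel]
  have recursion := card_cyclicPermsAvoiding_insert_add_card_erase (U.erase a) hc ha hca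
  rw [insert_erase ha, map_swap_erase ha (apply_mem_of_mem_cyclicPerms hc ha)] at recursion
  rw [add_comm, recursion]
  have card_eq := card_cyclicPermsAvoiding (m := 0) hc (erase_subset a U) (by lia)
  rw [card_erase, fwdDiff_iter_factorial_zero] at card_eq
  exact_mod_cast card_eq

lemma cyclicPermsAvoiding_singleton_self {c : Perm α} (hc : c ∈ cyclicPerms {a}) :
    cyclicPermsAvoiding {a} c {a} = ∅ := by
  rw [cyclicPerms_singleton, mem_singleton] at hc
  simp [cyclicPermsAvoiding, cyclicPerms_singleton, hc]

-- Both counts satisfy the recursion `card_cyclicPermsAvoiding_self_add_card_erase`, so no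
-- bijection between `U` and `V` transporting `c` to `d` is needed.
lemma card_cyclicPermsAvoiding_self_congr {β : Type*} [Fintype β] [DecidableEq β] {V : Finset β}
    {c : Perm α} {d : Perm β} (hc : c ∈ cyclicPerms U) (hd : d ∈ cyclicPerms V)
    (hU : U.Nonempty) (hUV : #U = #V) :
    #(cyclicPermsAvoiding U c U) = #(cyclicPermsAvoiding V d V) := by
  obtain ⟨n, hn⟩ := Nat.exists_eq_add_one.2 hU.card_pos
  induction n generalizing U V c d with
  | zero =>
    obtain ⟨a, rfl⟩ := card_eq_one.1 hn
    obtain ⟨b, rfl⟩ := card_eq_one.1 (hUV.symm.trans hn)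
    rw [cyclicPermsAvoiding_singleton_self hc, cyclicPermsAvoiding_singleton_self hd, card_empty,
      card_empty]
  | succ n ih =>
    obtain ⟨a, ha⟩ := hU
    obtain ⟨b, hb⟩ : V.Nonempty := card_pos.1 (by lia)
    have hca := apply_ne_of_mem_cyclicPerms hc (by lia) ha
    have hdb := apply_ne_of_mem_cyclicPerms hd (by lia) hb
    have hcaU := apply_mem_of_mem_cyclicPerms hc ha
    have hdbV := apply_mem_of_mem_cyclicPerms hd hb
    have card_erase_eq := ih ((mul_swap_mem_cyclicPerms_erase_iff ha hcaU hca.symm).2 ⟨hc, rfl⟩)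
      ((mul_swap_mem_cyclicPerms_erase_iff hb hdbV hdb.symm).2 ⟨hd, rfl⟩)
      ⟨a, mem_erase_of_ne_of_mem hca.symm ha⟩
      (by rw [card_erase_of_mem hcaU, card_erase_of_mem hdbV, hUV])
      (by rw [card_erase_of_mem hcaU, hn, Nat.add_sub_cancel])
    have recursion_U := card_cyclicPermsAvoiding_self_add_card_erase hc ha hca hn
    have recursion_V := card_cyclicPermsAvoiding_self_add_card_erase hd hb hdb (hUV.symm.trans hn)
    lia

end CyclicPerms

lemma addRight_one_mem_cyclicPerms (n : ℕ) [NeZero n] :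
    Equiv.addRight (1 : ZMod n) ∈ cyclicPerms univ := by
  refine mem_cyclicPerms.2 ⟨fun x _ y _ ↦ ⟨(y - x).val, ?_⟩, fun x hx ↦ absurd (mem_univ x) hx⟩
  simp

lemma f_eq_card_cyclicPermsAvoiding (n : ℕ) [NeZero n] :
    f n = #(cyclicPermsAvoiding univ (Equiv.addRight (1 : ZMod n)) univ) := by
  classical
  rw [f, Nat.card_eq_fintype_card, Fintype.card_subtype]
  congr 1
  ext σ
  simp only [cyclicPermsAvoiding, mem_filter, mem_univ, true_and, true_imp_iff,
    Equiv.coe_addRight]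
  rw [← and_assoc]
  refine and_congr_left fun hne ↦ ?_
  have : Nontrivial (ZMod n) := ⟨_, _, hne 0⟩
  rw [mem_cyclicPerms]
  constructor
  · rintro ⟨hσ, hfix⟩
    exact ⟨fun x _ y _ ↦ hσ.sameCycle (hfix x) (hfix y), fun x hx ↦ absurd (mem_univ x) hx⟩
  · intro hσ
    have hfix (x : ZMod n) : σ x ≠ x :=
      apply_ne_of_mem_cyclicPerms (mem_cyclicPerms.2 hσ) (by
        rw [card_univ]; exact Fintype.one_lt_card) (mem_univ x)
    exact ⟨⟨0, hfix 0, fun y _ ↦ hσ.1 0 (mem_univ 0) y (mem_univ y)⟩, hfix⟩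

lemma f_add_f_succ (n : ℕ) [NeZero n] : f n + f (n + 1) = numDerangements n := by
  set c := Equiv.addRight (1 : ZMod (n + 1))
  have hc : c ∈ cyclicPerms univ := addRight_one_mem_cyclicPerms (n + 1)
  have card_univ_eq : #(univ : Finset (ZMod (n + 1))) = n + 1 := by rw [card_univ, ZMod.card]
  have card_erase_eq : #(univ.erase (c 0)) = n := by
    rw [card_erase_of_mem (mem_univ _), card_univ_eq, Nat.add_sub_cancel]
  have hc0 : c 0 ≠ 0 := apply_ne_of_mem_cyclicPerms hc
    (by have := NeZero.pos n; lia) (mem_univ 0)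
  have hc' := (mul_swap_mem_cyclicPerms_erase_iff (mem_univ 0) (mem_univ _) hc0.symm).2 ⟨hc, rfl⟩
  have f_eq : f n = #(cyclicPermsAvoiding (univ.erase (c 0)) (c * swap 0 (c 0))
      (univ.erase (c 0))) := by
    rw [f_eq_card_cyclicPermsAvoiding n]
    exact card_cyclicPermsAvoiding_self_congr (addRight_one_mem_cyclicPerms n) hc'
      univ_nonempty (by rw [card_erase_eq, card_univ, ZMod.card])
  rw [f_eq, f_eq_card_cyclicPermsAvoiding (n + 1)]
  exact card_cyclicPermsAvoiding_self_add_card_erase hc (mem_univ 0) hc0 card_univ_eq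

lemma tendsto_f_div_factorial : Tendsto (fun n ↦ (f n : ℝ) / n !) atTop (𝓝 0) := by
  rw [← tendsto_add_atTop_iff_nat 1]
  have bound_tendsto : Tendsto (fun n ↦ (numDerangements n : ℝ) / n ! * (1 / (n + 1))) atTop
      (𝓝 0) := by
    simpa using numDerangements_tendsto_inv_e.mul tendsto_one_div_add_atTop_nhds_zero_nat
  refine squeeze_zero' (.of_forall fun n ↦ by positivity) ?_ bound_tendsto
  filter_upwards [eventually_ne_atTop 0] with n hn
  have : NeZero n := ⟨hn⟩
  have f_le : f (n + 1) ≤ numDerangements n := f_add_f_succ n ▸ Nat.le_add_left _ _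
  calc (f (n + 1) : ℝ) / (n + 1)!
    _ ≤ numDerangements n / (n + 1)! := by gcongr
    _ = numDerangements n / n ! * (1 / (n + 1)) := by
      rw [Nat.factorial_succ]
      push_cast
      field_simp

lemma tendsto_f_succ_div_factorial :
    Tendsto (fun n ↦ (f (n + 1) : ℝ) / n !) atTop (𝓝 (Real.exp (-1))) := by
  have diff_tendsto := numDerangements_tendsto_inv_e.sub tendsto_f_div_factorial
  rw [sub_zero] at diff_tendsto
  refine diff_tendsto.congr' ?_
  filter_upwards [eventually_ne_atTop 0] with n hn
  have : NeZero n := ⟨hn⟩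
  rw [← f_add_f_succ n, ← sub_div, Nat.cast_add, add_sub_cancel_left]

lemma T_add_div_factorial (k m : ℕ) :
    (T (k + 1) (k + 1 + m) : ℝ) / (k + 1 + m)! =
      (1 + m / (k + 1)) * (f (k + 1) / k !) / m ! := by
  have choose_mul : ((k + 1 + m).choose (k + 1) * ((k + 1) * k !) * m ! : ℝ) = (k + 1 + m)! := by
    rw [Nat.choose_symm_add]
    exact_mod_cast Nat.add_choose_mul_factorial_mul_factorial (k + 1) m
  rw [T, ← choose_mul]
  have : ((k + 1 + m).choose (k + 1) : ℝ) ≠ 0 := by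
    exact_mod_cast (Nat.choose_pos (Nat.le_add_right _ _)).ne'
  push_cast
  field_simp

theorem stmt15 (m : ℕ) :
    Tendsto (fun n : ℕ => (T (n - m) n : ℝ) / Nat.factorial n) atTop
      (nhds (Real.exp (-1) / Nat.factorial m)) := by
  have factor_tendsto : Tendsto (fun k : ℕ ↦ 1 + (m : ℝ) / (k + 1)) atTop (𝓝 1) := by
    have h := (tendsto_one_div_add_atTop_nhds_zero_nat (𝕜 := ℝ)).const_mul (m : ℝ)
    simpa only [mul_one_div, mul_zero, add_zero] using h.const_add 1
  have product_tendsto := (factor_tendsto.mul tendsto_f_succ_div_factorial).div_const (m ! : ℝ)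
  rw [one_mul] at product_tendsto
  rw [← tendsto_add_atTop_iff_nat (1 + m)]
  refine product_tendsto.congr fun k ↦ ?_
  rw [← add_assoc, Nat.add_sub_cancel, T_add_div_factorial]
end

section
/- Let m ≥ 2 and let β be a fixed-point-free involution of {1,…,2m} (β² = id and β(x) ≠ x for all x). Then: (1) c(k,β) = 0 for every odd integer k; and (2) for every nonnegative integer j, c(2j,β) = 2^m · m! · binom(m,j) · a(j), where a(j) is the number of fixed-point-free involutions τ of {0,1,…,2j−1} satisfying τ(x) ≠ σ(x) for all x, with σ the fixed-point-free involution of {0,1,…,2j−1} pairing 2i with 2i+1 (OEIS A053871; a(0) = 1). -/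
/-- `a j` is the number of fixed-point-free involutions `τ` of `{0, …, 2j-1}` that
disagree everywhere with the fixed-point-free involution pairing `2i` with `2i+1`
(OEIS A053871). -/
noncomputable def a (j : ℕ) : ℕ :=
  Nat.card {τ : Equiv.Perm (Fin (2 * j)) // τ * τ = 1 ∧ (∀ x, τ x ≠ x) ∧
    ∀ x : Fin (2 * j),
      (τ x : ℕ) ≠ (if (x : ℕ) % 2 = 0 then (x : ℕ) + 1 else (x : ℕ) - 1)}

/-!
The number of `x` with `α (β x) ≠ β (α x)` is the number of points where the conjugate
`τ = α * β * α⁻¹` disagrees with `β`. As `α` varies, `τ` runs over all fixed-point-free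
involutions, each being hit `2 ^ m * m!` times, the order of the centralizer of `β`. The set where
`τ` disagrees with `β` is a union of orbits of `β`, hence of even size `2 * j`; there are
`m.choose j` such unions, and on each of them `τ` is an arbitrary fixed-point-free involution
nowhere equal to `β`, while off it `τ` is forced to be `β`.
-/

open Equiv Finset

theorem card_subtype_eq_mul_of_card_fiber {A B : Type*} [Finite A] [Finite B] {p : A → Prop}
    {q : B → Prop} (f : A → B) (hpq : ∀ x, p x → q (f x)) {n : ℕ}
    (hn : ∀ y, q y → Nat.card {x // p x ∧ f x = y} = n) :
    Nat.card {x // p x} = Nat.card {y // q y} * n := by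
  have := Fintype.ofFinite {y // q y}
  have card_fiber (y : {y // q y}) : Nat.card {x // Subtype.map f hpq x = y} = n := by
    rw [← hn y y.2]
    exact Nat.card_congr <| (subtypeEquivRight fun x => Subtype.ext_iff).trans
      (subtypeSubtypeEquivSubtypeInter p fun x => f x = y)
  rw [← Nat.card_congr (sigmaFiberEquiv (Subtype.map f hpq)), Nat.card_sigma]
  simp only [card_fiber, sum_const, card_univ, Nat.card_eq_fintype_card, smul_eq_mul]

section Conjugation

variable {G : Type*} [Group G]

theorem card_conj_eq_of_isConj {g h : G} (hgh : IsConj g h) :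
    Nat.card {x // x * g * x⁻¹ = h} = Nat.card (Subgroup.centralizer {g}) := by
  obtain ⟨c, rfl⟩ := isConj_iff.1 hgh
  refine Nat.card_congr ((Equiv.mulLeft c⁻¹).subtypeEquiv fun x => ?_)
  simp only [Subgroup.mem_centralizer_singleton_iff, coe_mulLeft]
  rw [mul_inv_eq_iff_eq_mul, ← mul_right_inj c⁻¹]
  simp only [mul_assoc, inv_mul_cancel_left]

theorem card_subtype_conj [Finite G] (g : G) (p : G → Prop) :
    Nat.card {x // p (x * g * x⁻¹)} =
      Nat.card {h // IsConj g h ∧ p h} * Nat.card (Subgroup.centralizer {g}) := by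
  refine card_subtype_eq_mul_of_card_fiber (fun x => x * g * x⁻¹)
    (fun x hx => ⟨isConj_iff.2 ⟨x, rfl⟩, hx⟩) fun h ⟨hconj, hp⟩ => ?_
  rw [← card_conj_eq_of_isConj hconj]
  exact Nat.card_congr (subtypeEquivRight fun x => and_iff_right_of_imp fun hx => hx ▸ hp)

end Conjugation

variable {X Y : Type*}

/-- A pairing of `X` (a perfect matching), encoded as the fixed-point-free involution that exchanges
the two members of each pair. -/
structure IsPairing (τ : Perm X) : Prop where
  involutive : Function.Involutive τ
  apply_ne (x : X) : τ x ≠ x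

namespace IsPairing

theorem permCongr {τ : Perm X} (hτ : IsPairing τ) (e : X ≃ Y) : IsPairing (e.permCongr τ) where
  involutive y := by simp [hτ.involutive (e.symm y)]
  apply_ne y h := hτ.apply_ne (e.symm y) (e.eq_symm_apply.2 h)

theorem subtypePerm {τ : Perm X} (hτ : IsPairing τ) {p : X → Prop} (hp : ∀ x, p (τ x) ↔ p x) :
    IsPairing (τ.subtypePerm hp) where
  involutive x := Subtype.ext (hτ.involutive x)
  apply_ne x h := hτ.apply_ne x (congrArg Subtype.val h)

theorem sumCongr {σ : Perm X} {τ : Perm Y} (hσ : IsPairing σ) (hτ : IsPairing τ) :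
    IsPairing (Perm.sumCongr σ τ) where
  involutive
    | .inl x => congrArg Sum.inl (hσ.involutive x)
    | .inr y => congrArg Sum.inr (hτ.involutive y)
  apply_ne
    | .inl x => fun h => hσ.apply_ne x (Sum.inl_injective h)
    | .inr y => fun h => hτ.apply_ne y (Sum.inr_injective h)

theorem subtypeCongr {p : X → Prop} [DecidablePred p] {σ : Perm {x // p x}}
    {τ : Perm {x // ¬p x}} (hσ : IsPairing σ) (hτ : IsPairing τ) :
    IsPairing (σ.subtypeCongr τ) :=
  (hσ.sumCongr hτ).permCongr (sumCompl p)

theorem sq_eq_one {τ : Perm X} (hτ : IsPairing τ) : τ ^ 2 = 1 :=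
  Equiv.ext hτ.involutive

theorem support_eq_univ [Fintype X] [DecidableEq X] {τ : Perm X} (hτ : IsPairing τ) :
    τ.support = univ :=
  eq_univ_of_forall fun x => Perm.mem_support.2 (hτ.apply_ne x)

theorem cycleType_eq_replicate [Fintype X] [DecidableEq X] {τ : Perm X} (hτ : IsPairing τ)
    {m : ℕ} (hX : Fintype.card X = 2 * m) :
    τ.cycleType = Multiset.replicate m 2 := by
  have h_replicate := Perm.cycleType_of_pow_prime_eq_one hτ.sq_eq_one
  have h_sum : τ.cycleType.sum = 2 * m := by
    rw [Perm.sum_cycleType, hτ.support_eq_univ, card_univ, hX]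
  have h_card : τ.cycleType.card = m := by
    rw [h_replicate, Multiset.sum_replicate, smul_eq_mul, mul_comm] at h_sum
    exact Nat.mul_left_cancel two_pos h_sum
  rwa [h_card] at h_replicate

theorem even_card [Fintype X] {τ : Perm X} (hτ : IsPairing τ) : Even (Fintype.card X) := by
  classical
  rw [← card_univ, ← hτ.support_eq_univ, even_iff_two_dvd]
  exact Perm.two_dvd_card_support hτ.sq_eq_one

theorem isConj_iff [Finite X] {σ τ : Perm X} (hσ : IsPairing σ) :
    IsConj σ τ ↔ IsPairing τ := by
  classical
  have := Fintype.ofFinite X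
  constructor
  · intro h
    obtain ⟨c, rfl⟩ := _root_.isConj_iff.1 h
    exact hσ.permCongr c
  · intro hτ
    obtain ⟨m, hX⟩ := hσ.even_card.exists_two_nsmul
    rw [smul_eq_mul] at hX
    rw [Perm.isConj_iff_cycleType_eq, hσ.cycleType_eq_replicate hX, hτ.cycleType_eq_replicate hX]

theorem card_centralizer [Fintype X] {τ : Perm X} (hτ : IsPairing τ) {m : ℕ}
    (hX : Fintype.card X = 2 * m) :
    Nat.card (Subgroup.centralizer {τ}) = 2 ^ m * m.factorial := by
  classical
  rw [Perm.nat_card_centralizer, hτ.cycleType_eq_replicate hX, hX]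
  rcases eq_or_ne m 0 with rfl | hm
  · simp
  · simp [Multiset.toFinset_replicate, hm, mul_comm m 2]

theorem exists_permCongr_eq [Fintype X] [Fintype Y] {σ : Perm X} {τ : Perm Y} (hσ : IsPairing σ)
    (hτ : IsPairing τ) (hXY : Fintype.card X = Fintype.card Y) :
    ∃ e : X ≃ Y, e.permCongr σ = τ := by
  classical
  let e := Fintype.equivOfCardEq hXY
  obtain ⟨c, hc⟩ := _root_.isConj_iff.1 ((hσ.permCongr e).isConj_iff.2 hτ)
  exact ⟨e.trans c, hc⟩

end IsPairing

section InvariantFinset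

variable {ι : Type*}

/-- The pairing of `ι × Bool` that matches `(i, false)` with `(i, true)`; up to relabelling it is
the only pairing of a finite set. -/
def fiberPairing (ι : Type*) : Perm (ι × Bool) :=
  prodCongrRight fun _ => boolNot

theorem isPairing_fiberPairing : IsPairing (fiberPairing ι) where
  involutive x := Prod.ext rfl (Bool.not_not x.2)
  apply_ne x h := Bool.not_ne_self x.2 (congrArg Prod.snd h)

theorem exists_product_univ_eq_iff_fiberPairing_invariant {S : Finset (ι × Bool)} :
    (∃ T : Finset ι, T ×ˢ univ = S) ↔ ∀ x, fiberPairing ι x ∈ S ↔ x ∈ S := by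
  classical
  constructor
  · rintro ⟨T, rfl⟩ ⟨i, b⟩
    simp only [fiberPairing, prodCongrRight_apply, mem_product, mem_univ]
  · intro hS
    have true_mem_iff (i : ι) : (i, true) ∈ S ↔ (i, false) ∈ S := hS (i, false)
    refine ⟨S.image Prod.fst, ?_⟩
    ext ⟨i, b⟩
    cases b <;> simp [true_mem_iff]

theorem card_fiberPairing_invariant_finset [Fintype ι] (j : ℕ) :
    Nat.card {S : Finset (ι × Bool) // (∀ x, fiberPairing ι x ∈ S ↔ x ∈ S) ∧ #S = 2 * j} =
      (Fintype.card ι).choose j := by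
  let f (T : {T : Finset ι // #T = j}) :
      {S : Finset (ι × Bool) // (∀ x, fiberPairing ι x ∈ S ↔ x ∈ S) ∧ #S = 2 * j} :=
    ⟨T.1 ×ˢ univ, exists_product_univ_eq_iff_fiberPairing_invariant.1 ⟨T, rfl⟩, by
      rw [card_product, T.2, card_univ, Fintype.card_bool, mul_comm]⟩
  have hf : Function.Bijective f := by
    constructor
    · intro T T' h
      ext i
      simpa [f] using Finset.ext_iff.1 (congrArg Subtype.val h) (i, true)
    · rintro ⟨S, hS, hcard⟩
      obtain ⟨T, rfl⟩ := exists_product_univ_eq_iff_fiberPairing_invariant.2 hS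
      rw [card_product, card_univ, Fintype.card_bool] at hcard
      exact ⟨⟨T, by omega⟩, rfl⟩
  rw [← Nat.card_eq_of_bijective f hf, Nat.card_eq_fintype_card, Fintype.card_finset_len]

theorem IsPairing.card_invariant_finset [Fintype X] {β : Perm X} (hβ : IsPairing β) {m : ℕ}
    (hX : Fintype.card X = 2 * m) (j : ℕ) :
    Nat.card {S : Finset X // (∀ x, β x ∈ S ↔ x ∈ S) ∧ #S = 2 * j} = m.choose j := by
  obtain ⟨e, rfl⟩ : ∃ e : Fin m × Bool ≃ X, e.permCongr (fiberPairing (Fin m)) = β :=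
    isPairing_fiberPairing.exists_permCongr_eq hβ (by simp [hX, mul_comm])
  have card_eq_choose := card_fiberPairing_invariant_finset (ι := Fin m) j
  rw [Fintype.card_fin] at card_eq_choose
  rw [← card_eq_choose, eq_comm]
  refine Nat.card_congr (e.finsetCongr.subtypeEquiv fun S => ?_)
  simp only [finsetCongr_apply, mem_map_equiv, card_map, permCongr_apply, symm_apply_apply,
    e.forall_congr_left]

end InvariantFinset

/-- The pairings that share no pair with the pairing `β`. -/
abbrev DiscordantPairing (β : Perm X) : Type _ :=
  {τ : Perm X // IsPairing τ ∧ ∀ x, τ x ≠ β x}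

section DiscordantPairing

theorem card_discordantPairing_permCongr (e : X ≃ Y) (β : Perm X) :
    Nat.card (DiscordantPairing (e.permCongr β)) = Nat.card (DiscordantPairing β) := by
  refine Nat.card_congr (e.symm.permCongr.subtypeEquiv fun τ => and_congr ?_ ?_)
  · refine ⟨fun hτ => hτ.permCongr e.symm, fun hτ => ?_⟩
    convert hτ.permCongr e
    ext y
    simp
  · simp [symm_apply_eq, e.symm.forall_congr_left]

/-- The pairing of `Fin (2 * j)` that exchanges `2 * i` and `2 * i + 1`. -/
def adjacentPairing (j : ℕ) : Perm (Fin (2 * j)) :=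
  Function.Involutive.toPerm
    (fun x => ⟨if (x : ℕ) % 2 = 0 then x + 1 else x - 1, by split_ifs <;> omega⟩)
    (fun x => by ext; dsimp only; split_ifs <;> omega)

theorem val_adjacentPairing {j : ℕ} (x : Fin (2 * j)) :
    (adjacentPairing j x : ℕ) = if (x : ℕ) % 2 = 0 then (x : ℕ) + 1 else (x : ℕ) - 1 :=
  rfl

theorem isPairing_adjacentPairing (j : ℕ) : IsPairing (adjacentPairing j) where
  involutive := Function.Involutive.toPerm_involutive _
  apply_ne x h := by
    have := congrArg Fin.val h
    rw [val_adjacentPairing] at this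
    split_ifs at this <;> omega

theorem isPairing_iff_mul_self_eq_one {τ : Perm X} :
    IsPairing τ ↔ τ * τ = 1 ∧ ∀ x, τ x ≠ x :=
  ⟨fun hτ => ⟨Equiv.ext hτ.involutive, hτ.apply_ne⟩, fun ⟨h, h'⟩ => ⟨Equiv.ext_iff.1 h, h'⟩⟩

theorem card_discordantPairing_adjacentPairing (j : ℕ) :
    Nat.card (DiscordantPairing (adjacentPairing j)) = a j := by
  simp only [DiscordantPairing, a, isPairing_iff_mul_self_eq_one, and_assoc, ne_eq, Fin.ext_iff,
    val_adjacentPairing]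

theorem IsPairing.card_discordantPairing [Fintype X] {β : Perm X} (hβ : IsPairing β) {j : ℕ}
    (hX : Fintype.card X = 2 * j) : Nat.card (DiscordantPairing β) = a j := by
  obtain ⟨e, rfl⟩ := (isPairing_adjacentPairing j).exists_permCongr_eq hβ (by simp [hX])
  rw [card_discordantPairing_permCongr, card_discordantPairing_adjacentPairing]

end DiscordantPairing

/-- The set of points at which two permutations differ, so that its size is their Hamming
distance. -/
def disagreement [Fintype X] [DecidableEq X] (σ τ : Perm X) : Finset X :=
  {x | σ x ≠ τ x}

section Disagreement

variable [Fintype X] [DecidableEq X] {τ β : Perm X}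

theorem mem_disagreement {x : X} : x ∈ disagreement τ β ↔ τ x ≠ β x := by
  simp only [disagreement, mem_filter, mem_univ, true_and]

theorem disagreement_subtypeCongr {S : Finset X} (hS : ∀ x, β x ∈ S ↔ x ∈ S)
    (hSc : ∀ x, β x ∉ S ↔ x ∉ S) {σ : Perm {x // x ∈ S}} (hσ : ∀ x, σ x ≠ β.subtypePerm hS x) :
    disagreement (σ.subtypeCongr (β.subtypePerm hSc)) β = S := by
  ext x
  rw [mem_disagreement]
  by_cases hx : x ∈ S
  · rw [Perm.subtypeCongr.left_apply _ _ hx]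
    exact iff_of_true (fun h => hσ ⟨x, hx⟩ (Subtype.ext h)) hx
  · rw [Perm.subtypeCongr.right_apply _ _ hx]
    exact iff_of_false (fun h => h rfl) hx

theorem subtypeCongr_subtypePerm_disagreement
    (hτ : ∀ x, τ x ∈ disagreement τ β ↔ x ∈ disagreement τ β)
    (hβ : ∀ x, β x ∉ disagreement τ β ↔ x ∉ disagreement τ β) :
    (τ.subtypePerm hτ).subtypeCongr (β.subtypePerm hβ) = τ := by
  ext x
  by_cases hx : x ∈ disagreement τ β
  · exact Perm.subtypeCongr.left_apply _ _ hx
  · rw [Perm.subtypeCongr.right_apply _ _ hx]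
    exact (not_not.1 (mem_disagreement.not.1 hx)).symm

namespace IsPairing

theorem apply_right_mem_disagreement (hτ : IsPairing τ) (hβ : IsPairing β) (x : X) :
    β x ∈ disagreement τ β ↔ x ∈ disagreement τ β := by
  rw [mem_disagreement, mem_disagreement, hβ.involutive, ne_comm (a := τ x), not_iff_not,
    hτ.involutive.eq_iff]

theorem apply_left_mem_disagreement (hτ : IsPairing τ) (hβ : IsPairing β) (x : X) :
    τ x ∈ disagreement τ β ↔ x ∈ disagreement τ β := by
  rw [mem_disagreement, mem_disagreement, hτ.involutive, ne_comm (a := x), not_iff_not,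
    hβ.involutive.eq_iff, eq_comm]

theorem even_card_disagreement (hτ : IsPairing τ) (hβ : IsPairing β) :
    Even #(disagreement τ β) := by
  rw [← Fintype.card_coe]
  exact (hβ.subtypePerm (hτ.apply_right_mem_disagreement hβ)).even_card

theorem card_pairings_disagreement_eq (hβ : IsPairing β) {S : Finset X}
    (hS : ∀ x, β x ∈ S ↔ x ∈ S) :
    Nat.card {τ : Perm X // IsPairing τ ∧ disagreement τ β = S} =
      Nat.card (DiscordantPairing (β.subtypePerm hS)) := by
  have hSc (x : X) : β x ∉ S ↔ x ∉ S := not_congr (hS x)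
  let f (σ : DiscordantPairing (β.subtypePerm hS)) :
      {τ : Perm X // IsPairing τ ∧ disagreement τ β = S} :=
    ⟨σ.1.subtypeCongr (β.subtypePerm hSc), σ.2.1.subtypeCongr (hβ.subtypePerm hSc),
      disagreement_subtypeCongr hS hSc σ.2.2⟩
  refine (Nat.card_eq_of_bijective f ⟨fun σ σ' h => ?_, fun ⟨τ, hτ, hτS⟩ => ?_⟩).symm
  · have h_pair : (σ.1, β.subtypePerm hSc) = (σ'.1, β.subtypePerm hSc) :=
      Perm.subtypeCongrHom_injective (· ∈ S) (congrArg Subtype.val h)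
    exact Subtype.ext (congrArg Prod.fst h_pair)
  · subst hτS
    have hτ_mem := hτ.apply_left_mem_disagreement hβ
    refine ⟨⟨τ.subtypePerm hτ_mem, hτ.subtypePerm _,
      fun x h => mem_disagreement.1 x.2 (congrArg Subtype.val h)⟩, ?_⟩
    exact Subtype.ext (subtypeCongr_subtypePerm_disagreement hτ_mem hSc)

theorem card_pairings_card_disagreement_eq (hβ : IsPairing β) {m : ℕ} (hX : Fintype.card X = 2 * m)
    (j : ℕ) :
    Nat.card {τ : Perm X // IsPairing τ ∧ #(disagreement τ β) = 2 * j} = m.choose j * a j := by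
  rw [← hβ.card_invariant_finset hX j]
  refine card_subtype_eq_mul_of_card_fiber (disagreement · β)
    (fun τ ⟨hτ, hcard⟩ => ⟨hτ.apply_right_mem_disagreement hβ, hcard⟩) fun S ⟨hS, hcard⟩ => ?_
  rw [← (hβ.subtypePerm hS).card_discordantPairing ((Fintype.card_coe S).trans hcard),
    ← hβ.card_pairings_disagreement_eq hS]
  refine Nat.card_congr (subtypeEquivRight fun τ => ?_)
  rw [and_assoc, and_congr_right_iff]
  exact fun _ => and_iff_right_of_imp fun h => h ▸ hcard

end IsPairing

end Disagreement

section Commutation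

variable {n : ℕ}

theorem ham_mul_comm_eq_card_disagreement_conj (α β : Perm (Fin n)) :
    ham (α * β) (β * α) = #(disagreement (α * β * α⁻¹) β) := by
  refine card_equiv α fun x => ?_
  rw [mem_filter, mem_disagreement]
  simp

theorem kcomm_eq_card_isConj_mul_card_centralizer (k : ℕ) (β : Perm (Fin n)) :
    kcomm k β = Nat.card {τ // IsConj β τ ∧ #(disagreement τ β) = k} *
      Nat.card (Subgroup.centralizer {β}) := by
  simp only [kcomm, ham_mul_comm_eq_card_disagreement_conj]
  exact card_subtype_conj β fun τ => #(disagreement τ β) = k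

theorem IsPairing.kcomm_of_odd {β : Perm (Fin n)} (hβ : IsPairing β) {k : ℕ} (hk : Odd k) :
    kcomm k β = 0 := by
  have h_empty : IsEmpty {τ // IsConj β τ ∧ #(disagreement τ β) = k} := by
    refine ⟨fun ⟨τ, hconj, hcard⟩ => Nat.not_even_iff_odd.2 hk ?_⟩
    exact hcard ▸ (hβ.isConj_iff.1 hconj).even_card_disagreement hβ
  rw [kcomm_eq_card_isConj_mul_card_centralizer, Nat.card_of_isEmpty, zero_mul]

theorem IsPairing.kcomm_two_mul {m : ℕ} {β : Perm (Fin (2 * m))} (hβ : IsPairing β) (j : ℕ) :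
    kcomm (2 * j) β = 2 ^ m * m.factorial * m.choose j * a j := by
  have hX : Fintype.card (Fin (2 * m)) = 2 * m := Fintype.card_fin _
  simp only [kcomm_eq_card_isConj_mul_card_centralizer, hβ.isConj_iff]
  rw [hβ.card_pairings_card_disagreement_eq hX, hβ.card_centralizer hX]
  ring

end Commutation

theorem stmt19 (m : ℕ) (hm : 2 ≤ m) (β : Equiv.Perm (Fin (2 * m)))
    (hβ1 : β * β = 1) (hβ2 : ∀ x, β x ≠ x) :
    (∀ k, Odd k → kcomm k β = 0) ∧
    (∀ j : ℕ, kcomm (2 * j) β = 2 ^ m * Nat.factorial m * Nat.choose m j * a j) := by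
  have hβ : IsPairing β := isPairing_iff_mul_self_eq_one.2 ⟨hβ1, hβ2⟩
  exact ⟨fun _ hk => hβ.kcomm_of_odd hk, hβ.kcomm_two_mul⟩
end
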